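/- arXiv:math/0603600 — 7 statements merged into one kernel-verified Lean document; each statement's English description precedes it below -/
import Mathlib

section
/- Let $M_1$ and $M_2$ be nonempty finite sets and $\phi : M_1 \times M_2 \to \mathbb{R}$ an arbitrary function. For probability vectors $\mu_1 \in \mathcal{P}(M_1)$ and $\mu_2 \in \mathcal{P}(M_2)$ define the mixed extension $\phi(\mu_1, \mu_2) = \sum_{i \in M_1} \sum_{j \in M_2} \mu_1(i)\, \mu_2(j)\, \phi(i,j)$. Then $\min_{\mu_1 \in \mathcal{P}(M_1)} \max_{\mu_2 \in \mathcal{P}(M_2)} \phi(\mu_1, \mu_2) = \max_{\mu_2 \in \mathcal{P}(M_2)} \min_{\mu_1 \in \mathcal{P}(M_1)} \phi(\mu_1, \mu_2)$, where all the indicated minima and maxima are attained. -/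
/-!
The mixed extension of `φ` is bilinear, hence continuous and affine in each variable, and the
simplices are nonempty, compact and convex. Sion's theorem `Sion.exists_isSaddlePointOn` therefore
gives a saddle point `(a, b)`, and the value at `(a, b)` is both the min-max and the max-min:
`a` attains the outer minimum, `b` attains the outer maximum, and each is a best response to
the other.
-/

/-- The mixed extension of the payoff `φ`, as a bilinear form on all pairs of vectors
(not only probability vectors). -/
def mixedExtension {M1 M2 : Type*} [Fintype M1] [Fintype M2] (φ : M1 → M2 → ℝ) :
    (M1 → ℝ) →ₗ[ℝ] (M2 → ℝ) →ₗ[ℝ] ℝ :=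
  LinearMap.mk₂ ℝ (fun μ1 μ2 => ∑ i, ∑ j, μ1 i * μ2 j * φ i j)
    (fun _ _ _ => by simp only [Pi.add_apply, add_mul, Finset.sum_add_distrib])
    (fun _ _ _ => by simp only [Pi.smul_apply, smul_eq_mul, Finset.mul_sum, mul_assoc])
    (fun _ _ _ => by simp only [Pi.add_apply, mul_add, add_mul, Finset.sum_add_distrib])
    (fun _ _ _ => by
      simp only [Pi.smul_apply, smul_eq_mul, Finset.mul_sum, mul_assoc, mul_left_comm])

theorem exists_isSaddlePointOn_mixedExtension {M1 M2 : Type*} [Fintype M1] [Fintype M2]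
    [Nonempty M1] [Nonempty M2] (φ : M1 → M2 → ℝ) :
    ∃ a ∈ stdSimplex ℝ M1, ∃ b ∈ stdSimplex ℝ M2,
      IsSaddlePointOn (stdSimplex ℝ M1) (stdSimplex ℝ M2)
        (fun μ1 μ2 => mixedExtension φ μ1 μ2) a b := by
  classical
  exact Sion.exists_isSaddlePointOn
    ⟨_, single_mem_stdSimplex ℝ (Classical.arbitrary M1)⟩
    (convex_stdSimplex ℝ M1) (isCompact_stdSimplex ℝ M1)
    (fun μ2 _ => ((mixedExtension φ).flip μ2).continuous_of_finiteDimensional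
      |>.lowerSemicontinuous.lowerSemicontinuousOn _)
    (fun μ2 _ => (((mixedExtension φ).flip μ2).convexOn (convex_stdSimplex ℝ M1)).quasiconvexOn)
    (convex_stdSimplex ℝ M2)
    ⟨_, single_mem_stdSimplex ℝ (Classical.arbitrary M2)⟩
    (isCompact_stdSimplex ℝ M2)
    (fun μ1 _ => (mixedExtension φ μ1).continuous_of_finiteDimensional
      |>.upperSemicontinuous.upperSemicontinuousOn _)
    (fun μ1 _ => ((mixedExtension φ μ1).concaveOn (convex_stdSimplex ℝ M2)).quasiconcaveOn)

/-- **Von Neumann's minimax theorem** for finite zero-sum games with mixed strategies.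
For nonempty finite sets `M1`, `M2`, an arbitrary payoff `φ : M1 × M2 → ℝ`, and its
mixed extension `φ(μ1,μ2) = ∑ i ∑ j μ1(i) μ2(j) φ(i,j)` over probability vectors,
`min_{μ1} max_{μ2} φ(μ1,μ2) = max_{μ2} min_{μ1} φ(μ1,μ2)`, with all minima and
maxima attained. -/
theorem vonNeumann_minimax
    {M1 M2 : Type*} [Fintype M1] [Fintype M2] [Nonempty M1] [Nonempty M2]
    (φ : M1 → M2 → ℝ) :
    ∃ v : ℝ,
      IsLeast {z | ∃ μ1 ∈ stdSimplex ℝ M1,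
        IsGreatest {w | ∃ μ2 ∈ stdSimplex ℝ M2,
          w = ∑ i, ∑ j, μ1 i * μ2 j * φ i j} z} v ∧
      IsGreatest {z | ∃ μ2 ∈ stdSimplex ℝ M2,
        IsLeast {w | ∃ μ1 ∈ stdSimplex ℝ M1,
          w = ∑ i, ∑ j, μ1 i * μ2 j * φ i j} z} v := by
  obtain ⟨a, ha, b, hb, hab⟩ := exists_isSaddlePointOn_mixedExtension φ
  refine ⟨mixedExtension φ a b, ⟨⟨a, ha, ⟨b, hb, rfl⟩, ?_⟩, ?_⟩, ⟨b, hb, ⟨a, ha, rfl⟩, ?_⟩, ?_⟩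
  · rintro _ ⟨y, hy, rfl⟩
    exact hab a ha y hy
  -- `b` guarantees at least the value at `(a, b)` against every `x`, so every inner maximum does
  · rintro z ⟨x, hx, -, hz⟩
    exact (hab x hx b hb).trans (hz ⟨b, hb, rfl⟩)
  · rintro _ ⟨x, hx, rfl⟩
    exact hab x hx b hb
  · rintro z ⟨y, hy, -, hz⟩
    exact (hz ⟨a, ha, rfl⟩).trans (hab a ha y hy)
end

section
/- Let $S$ be a nonempty finite set, $U_1, U_2 \subseteq \mathbb{R}$ nonempty compact convex sets, $\alpha \in [0,1)$, $p : S \times S \times U_1 \times U_2 \to \mathbb{R}$ with $p(x,y|r_1,r_2) \ge 0$ and $\sum_{y \in S} p(x,y|r_1,r_2) = 1$, such that for all $x, y \in S$ the map $(r_1,r_2) \mapsto p(x,y|r_1,r_2)$ is continuous and convex-concave on $U_1 \times U_2$, and let $c : S \times U_1 \times U_2 \to \mathbb{R}$ be such that $(r_1,r_2) \mapsto c(x,r_1,r_2)$ is continuous, convex-concave, and nonnegative for all $x$. Let $V^+$ be the unique fixed point of the upper Bellman operator $T^+$ and $V^-$ the unique fixed point of the lower Bellman operator $T^-$. Then $V^+(x)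 = V^-(x)$ for all $x \in S$, i.e. the discrete Markov game has a saddle point. -/
/-!
For a fixed `V`, the stage payoff `f x r1 r2 = c x r1 r2 + α ∑ y, p x y r1 r2 * V y` is continuous
and convex-concave: the weights `p x y` sum to one, so adding a constant to `V` changes the
payoff only by a constant, and `V` may be taken nonnegative (`convexOn_sum_mul`). Sion's minimax
theorem then gives a saddle point of `f x` (`exists_saddlePoint_stagePayoff`), at which both the
upper and the lower Bellman operators take their values (`sInf_sSup_eq_of_isSaddlePointOn`,
`sSup_sInf_eq_of_isSaddlePointOn`).

So `Vp` and `Vm` are both saddle-point values of the stage games that they generate. Playing the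
minimizer's strategy from one stage game against the maximizer's from the other gives
`V x - W x ≤ α ∑ y, p x y * (V y - W y) ≤ α * max (V - W)` for any two such functions `V` and `W`;
as `α < 1`, this forces `V ≤ W` (`le_of_saddle_values`), and symmetrically `W ≤ V`.
-/

/-- The upper Bellman operator
`(T⁺V)(x) = min_{r1 ∈ U1} max_{r2 ∈ U2} [c(x,r1,r2) + α ∑_y p(x,y|r1,r2) V(y)]`. -/
noncomputable def upperBellman {S : Type*} [Fintype S] (U1 U2 : Set ℝ) (α : ℝ)
    (p : S → S → ℝ → ℝ → ℝ) (c : S → ℝ → ℝ → ℝ) (V : S → ℝ) (x : S) : ℝ :=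
  sInf {z | ∃ r1 ∈ U1, z = sSup {w | ∃ r2 ∈ U2,
    w = c x r1 r2 + α * ∑ y, p x y r1 r2 * V y}}

/-- The lower Bellman operator
`(T⁻V)(x) = max_{r2 ∈ U2} min_{r1 ∈ U1} [c(x,r1,r2) + α ∑_y p(x,y|r1,r2) V(y)]`. -/
noncomputable def lowerBellman {S : Type*} [Fintype S] (U1 U2 : Set ℝ) (α : ℝ)
    (p : S → S → ℝ → ℝ → ℝ) (c : S → ℝ → ℝ → ℝ) (V : S → ℝ) (x : S) : ℝ :=
  sSup {z | ∃ r2 ∈ U2, z = sInf {w | ∃ r1 ∈ U1,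
    w = c x r1 r2 + α * ∑ y, p x y r1 r2 * V y}}

/-- The payoff of the one-stage game at state `x` with continuation value `V`. -/
noncomputable def stagePayoff {S : Type*} [Fintype S] (α : ℝ)
    (p : S → S → ℝ → ℝ → ℝ) (c : S → ℝ → ℝ → ℝ) (V : S → ℝ) (x : S) (r1 r2 : ℝ) : ℝ :=
  c x r1 r2 + α * ∑ y, p x y r1 r2 * V y

/-- Convexity of `∑ y, q y * V y` for convex `q y` of constant sum. No sign condition on `V` is
needed, since shifting `V` by a constant shifts the sum by a constant. -/
lemma convexOn_sum_mul {S : Type*} [Fintype S] {U : Set ℝ} (hU : Convex ℝ U)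
    {q : S → ℝ → ℝ} (hq : ∀ y, ConvexOn ℝ U (q y)) {k : ℝ}
    (hsum : ∀ r ∈ U, ∑ y, q y r = k) (V : S → ℝ) :
    ConvexOn ℝ U (fun r => ∑ y, q y r * V y) := by
  set K : ℝ := ∑ y, |V y| with hK
  have hVK : ∀ y, 0 ≤ V y + K := fun y => by
    have h1 : |V y| ≤ K :=
      Finset.single_le_sum (f := fun y => |V y|) (fun i _ => abs_nonneg _) (Finset.mem_univ y)
    linarith [neg_abs_le (V y)]
  have hshift : ∀ r ∈ U, ∑ y, q y r * V y = ∑ y, q y r * (V y + K) - k * K := fun r hr => by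
    simp only [mul_add, Finset.sum_add_distrib, ← Finset.sum_mul, hsum r hr]
    ring
  refine ⟨hU, fun r hr s hs a b ha hb hab => ?_⟩
  have hle : ∑ y, q y (a • r + b • s) * (V y + K)
      ≤ a * ∑ y, q y r * (V y + K) + b * ∑ y, q y s * (V y + K) := by
    rw [Finset.mul_sum, Finset.mul_sum, ← Finset.sum_add_distrib]
    refine Finset.sum_le_sum fun y _ => ?_
    have h := mul_le_mul_of_nonneg_right ((hq y).2 hr hs ha hb hab) (hVK y)
    simp only [smul_eq_mul] at h ⊢
    linarith
  have hkK : a * (k * K) + b * (k * K) = k * K := by rw [← add_mul, hab, one_mul]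
  simp only [hshift _ (hU hr hs ha hb hab), hshift r hr, hshift s hs]
  simp only [smul_eq_mul] at hle ⊢
  linarith

lemma concaveOn_sum_mul {S : Type*} [Fintype S] {U : Set ℝ} (hU : Convex ℝ U)
    {q : S → ℝ → ℝ} (hq : ∀ y, ConcaveOn ℝ U (q y)) {k : ℝ}
    (hsum : ∀ r ∈ U, ∑ y, q y r = k) (V : S → ℝ) :
    ConcaveOn ℝ U (fun r => ∑ y, q y r * V y) := by
  have h := convexOn_sum_mul hU (q := fun y => -q y) (fun y => (hq y).neg) (k := -k)
    (fun r hr => by simp [hsum r hr]) V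
  refine h.neg.congr fun r _ => ?_
  simp

/-- Continuity in `r2` keeps the inner suprema from being suprema of unbounded sets. -/
lemma sInf_sSup_eq_of_isSaddlePointOn {U1 U2 : Set ℝ} (hU2 : IsCompact U2) {f : ℝ → ℝ → ℝ}
    (hf : ∀ r1 ∈ U1, ContinuousOn (f r1) U2) {a b : ℝ} (ha : a ∈ U1) (hb : b ∈ U2)
    (hab : IsSaddlePointOn U1 U2 f a b) :
    sInf {z | ∃ r1 ∈ U1, z = sSup {w | ∃ r2 ∈ U2, w = f r1 r2}} = f a b := by
  refine IsLeast.csInf_eq ⟨⟨a, ha, ?_⟩, ?_⟩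
  · symm
    refine IsGreatest.csSup_eq ⟨⟨b, hb, rfl⟩, ?_⟩
    rintro _ ⟨r2, h2, rfl⟩
    exact hab a ha r2 h2
  · rintro _ ⟨r1, h1, rfl⟩
    have hbdd : BddAbove {w | ∃ r2 ∈ U2, w = f r1 r2} := by
      refine (hU2.bddAbove_image (hf r1 h1)).mono ?_
      rintro _ ⟨r2, h2, rfl⟩
      exact ⟨r2, h2, rfl⟩
    exact (hab r1 h1 b hb).trans (le_csSup hbdd ⟨b, hb, rfl⟩)

lemma sSup_sInf_eq_of_isSaddlePointOn {U1 U2 : Set ℝ} (hU1 : IsCompact U1) {f : ℝ → ℝ → ℝ}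
    (hf : ∀ r2 ∈ U2, ContinuousOn (fun r1 => f r1 r2) U1) {a b : ℝ} (ha : a ∈ U1) (hb : b ∈ U2)
    (hab : IsSaddlePointOn U1 U2 f a b) :
    sSup {z | ∃ r2 ∈ U2, z = sInf {w | ∃ r1 ∈ U1, w = f r1 r2}} = f a b := by
  refine IsGreatest.csSup_eq ⟨⟨b, hb, ?_⟩, ?_⟩
  · symm
    refine IsLeast.csInf_eq ⟨⟨a, ha, rfl⟩, ?_⟩
    rintro _ ⟨r1, h1, rfl⟩
    exact hab r1 h1 b hb
  · rintro _ ⟨r2, h2, rfl⟩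
    have hbdd : BddBelow {w | ∃ r1 ∈ U1, w = f r1 r2} := by
      refine (hU1.bddBelow_image (hf r2 h2)).mono ?_
      rintro _ ⟨r1, h1, rfl⟩
      exact ⟨r1, h1, rfl⟩
    exact (csInf_le hbdd ⟨a, ha, rfl⟩).trans (hab a ha r2 h2)

lemma continuousOn_stagePayoff {S : Type*} [Fintype S] {U1 U2 : Set ℝ} (α : ℝ)
    {p : S → S → ℝ → ℝ → ℝ}
    (hpcont : ∀ x y, ContinuousOn (fun r : ℝ × ℝ => p x y r.1 r.2) (U1 ×ˢ U2))
    {c : S → ℝ → ℝ → ℝ}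
    (hccont : ∀ x, ContinuousOn (fun r : ℝ × ℝ => c x r.1 r.2) (U1 ×ˢ U2))
    (V : S → ℝ) (x : S) :
    ContinuousOn (fun r : ℝ × ℝ => stagePayoff α p c V x r.1 r.2) (U1 ×ˢ U2) :=
  (hccont x).add (continuousOn_const.mul
    (continuousOn_finsetSum _ fun y _ => (hpcont x y).mul continuousOn_const))

/-- Sion's minimax theorem for the stage game. -/
lemma exists_saddlePoint_stagePayoff {S : Type*} [Fintype S] {U1 U2 : Set ℝ}
    (hU1ne : U1.Nonempty) (hU1cp : IsCompact U1) (hU1cv : Convex ℝ U1)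
    (hU2ne : U2.Nonempty) (hU2cp : IsCompact U2) (hU2cv : Convex ℝ U2)
    {α : ℝ} (hα0 : 0 ≤ α) {p : S → S → ℝ → ℝ → ℝ}
    (hpsum : ∀ x, ∀ r1 ∈ U1, ∀ r2 ∈ U2, (∑ y, p x y r1 r2) = 1)
    (hpconv : ∀ x y, ∀ r2 ∈ U2, ConvexOn ℝ U1 (fun r1 => p x y r1 r2))
    (hpconc : ∀ x y, ∀ r1 ∈ U1, ConcaveOn ℝ U2 (fun r2 => p x y r1 r2))
    {c : S → ℝ → ℝ → ℝ}
    (hcconv : ∀ x, ∀ r2 ∈ U2, ConvexOn ℝ U1 (fun r1 => c x r1 r2))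
    (hcconc : ∀ x, ∀ r1 ∈ U1, ConcaveOn ℝ U2 (fun r2 => c x r1 r2))
    {V : S → ℝ} {x : S}
    (hf1 : ∀ r2 ∈ U2, ContinuousOn (fun r1 => stagePayoff α p c V x r1 r2) U1)
    (hf2 : ∀ r1 ∈ U1, ContinuousOn (stagePayoff α p c V x r1) U2) :
    ∃ a ∈ U1, ∃ b ∈ U2, IsSaddlePointOn U1 U2 (stagePayoff α p c V x) a b := by
  refine Sion.exists_isSaddlePointOn hU1ne hU1cv hU1cp
    (fun r2 h2 => (hf1 r2 h2).lowerSemicontinuousOn) (fun r2 h2 => ?_) hU2cv hU2ne hU2cp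
    (fun r1 h1 => (hf2 r1 h1).upperSemicontinuousOn) (fun r1 h1 => ?_)
  · exact ((hcconv x r2 h2).add ((convexOn_sum_mul hU1cv (fun y => hpconv x y r2 h2)
      (fun r1 h1 => hpsum x r1 h1 r2 h2) V).smul hα0)).quasiconvexOn
  · exact ((hcconc x r1 h1).add ((concaveOn_sum_mul hU2cv (fun y => hpconc x y r1 h1)
      (fun r2 h2 => hpsum x r1 h1 r2 h2) V).smul hα0)).quasiconcaveOn

/-- Comparison principle: if `V` and `W` are saddle-point values of the stage games with
continuation values `V` and `W`, then `V ≤ W`. -/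
lemma le_of_saddle_values {S : Type*} [Fintype S] {U1 U2 : Set ℝ}
    {α : ℝ} (hα0 : 0 ≤ α) (hα1 : α < 1) {p : S → S → ℝ → ℝ → ℝ}
    (hpnn : ∀ x y, ∀ r1 ∈ U1, ∀ r2 ∈ U2, 0 ≤ p x y r1 r2)
    (hpsum : ∀ x, ∀ r1 ∈ U1, ∀ r2 ∈ U2, (∑ y, p x y r1 r2) = 1)
    {c : S → ℝ → ℝ → ℝ} {V W : S → ℝ}
    (hV : ∀ x, ∃ a ∈ U1, ∃ b ∈ U2, IsSaddlePointOn U1 U2 (stagePayoff α p c V x) a b ∧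
      V x = stagePayoff α p c V x a b)
    (hW : ∀ x, ∃ a ∈ U1, ∃ b ∈ U2, IsSaddlePointOn U1 U2 (stagePayoff α p c W x) a b ∧
      W x = stagePayoff α p c W x a b) (x : S) : V x ≤ W x := by
  have : Nonempty S := ⟨x⟩
  obtain ⟨m, hm⟩ := Finite.exists_max fun y => V y - W y
  obtain ⟨a, ha, b, hb, hab, hVm⟩ := hV m
  obtain ⟨a', ha', b', hb', hab', hWm⟩ := hW m
  have h1 : V m ≤ stagePayoff α p c V m a' b := hVm ▸ hab a' ha' b hb
  have h2 : stagePayoff α p c W m a' b ≤ W m := hWm ▸ hab' a' ha' b hb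
  have h3 : ∑ y, p m y a' b * V y - ∑ y, p m y a' b * W y ≤ V m - W m := by
    rw [← Finset.sum_sub_distrib]
    calc ∑ y, (p m y a' b * V y - p m y a' b * W y)
        ≤ ∑ y, p m y a' b * (V m - W m) := Finset.sum_le_sum fun y _ => by
          rw [← mul_sub]
          exact mul_le_mul_of_nonneg_left (hm y) (hpnn m y a' ha' b hb)
      _ = V m - W m := by rw [← Finset.sum_mul, hpsum m a' ha' b hb, one_mul]
  have h4 := mul_le_mul_of_nonneg_left h3 hα0
  have h5 : V m - W m ≤ α * (V m - W m) := by
    unfold stagePayoff at h1 h2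
    linarith
  have h6 : V m - W m ≤ 0 := by nlinarith
  linarith [hm x]

/-- **Existence of saddle points under (H2)** (Theorem 1 of the paper, discounted
form).  If the transition probabilities and the running cost are continuous and
convex-concave in the controls, then the upper value `V⁺` (the unique fixed point
of `T⁺`) and the lower value `V⁻` (the unique fixed point of `T⁻`) coincide: the
discrete Markov game has a saddle point. -/
theorem discrete_markov_game_saddle_point_convexConcave
    {S : Type*} [Fintype S] [Nonempty S]
    (U1 U2 : Set ℝ)
    (hU1ne : U1.Nonempty) (hU1cp : IsCompact U1) (hU1cv : Convex ℝ U1)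
    (hU2ne : U2.Nonempty) (hU2cp : IsCompact U2) (hU2cv : Convex ℝ U2)
    (α : ℝ) (hα0 : 0 ≤ α) (hα1 : α < 1)
    (p : S → S → ℝ → ℝ → ℝ)
    (hpnn : ∀ x y, ∀ r1 ∈ U1, ∀ r2 ∈ U2, 0 ≤ p x y r1 r2)
    (hpsum : ∀ x, ∀ r1 ∈ U1, ∀ r2 ∈ U2, (∑ y, p x y r1 r2) = 1)
    (hpcont : ∀ x y, ContinuousOn (fun r : ℝ × ℝ => p x y r.1 r.2) (U1 ×ˢ U2))
    (hpconv : ∀ x y, ∀ r2 ∈ U2, ConvexOn ℝ U1 (fun r1 => p x y r1 r2))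
    (hpconc : ∀ x y, ∀ r1 ∈ U1, ConcaveOn ℝ U2 (fun r2 => p x y r1 r2))
    (c : S → ℝ → ℝ → ℝ)
    (hccont : ∀ x, ContinuousOn (fun r : ℝ × ℝ => c x r.1 r.2) (U1 ×ˢ U2))
    (hcconv : ∀ x, ∀ r2 ∈ U2, ConvexOn ℝ U1 (fun r1 => c x r1 r2))
    (hcconc : ∀ x, ∀ r1 ∈ U1, ConcaveOn ℝ U2 (fun r2 => c x r1 r2))
    (hcnn : ∀ x, ∀ r1 ∈ U1, ∀ r2 ∈ U2, 0 ≤ c x r1 r2)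
    (Vp Vm : S → ℝ)
    (hVp : upperBellman U1 U2 α p c Vp = Vp)
    (hVm : lowerBellman U1 U2 α p c Vm = Vm) :
    ∀ x : S, Vp x = Vm x := by
  have hf1 : ∀ V x, ∀ r2 ∈ U2, ContinuousOn (fun r1 => stagePayoff α p c V x r1 r2) U1 :=
    fun V x r2 h2 => (continuousOn_stagePayoff α hpcont hccont V x).comp
      (f := fun r1 => (r1, r2)) (by fun_prop) fun r1 h1 => ⟨h1, h2⟩
  have hf2 : ∀ V x, ∀ r1 ∈ U1, ContinuousOn (stagePayoff α p c V x r1) U2 :=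
    fun V x r1 h1 => (continuousOn_stagePayoff α hpcont hccont V x).comp
      (f := fun r2 => (r1, r2)) (by fun_prop) fun r2 h2 => ⟨h1, h2⟩
  have hsaddle : ∀ V x, ∃ a ∈ U1, ∃ b ∈ U2,
      IsSaddlePointOn U1 U2 (stagePayoff α p c V x) a b := fun V x =>
    exists_saddlePoint_stagePayoff hU1ne hU1cp hU1cv hU2ne hU2cp hU2cv hα0 hpsum hpconv hpconc
      hcconv hcconc (hf1 V x) (hf2 V x)
  have hp : ∀ x, ∃ a ∈ U1, ∃ b ∈ U2, IsSaddlePointOn U1 U2 (stagePayoff α p c Vp x) a b ∧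
      Vp x = stagePayoff α p c Vp x a b := fun x => by
    obtain ⟨a, ha, b, hb, hab⟩ := hsaddle Vp x
    exact ⟨a, ha, b, hb, hab, (congrFun hVp x).symm.trans
      (sInf_sSup_eq_of_isSaddlePointOn hU2cp (hf2 Vp x) ha hb hab)⟩
  have hm : ∀ x, ∃ a ∈ U1, ∃ b ∈ U2, IsSaddlePointOn U1 U2 (stagePayoff α p c Vm x) a b ∧
      Vm x = stagePayoff α p c Vm x a b := fun x => by
    obtain ⟨a, ha, b, hb, hab⟩ := hsaddle Vm x
    exact ⟨a, ha, b, hb, hab, (congrFun hVm x).symm.trans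
      (sSup_sInf_eq_of_isSaddlePointOn hU1cp (hf1 Vm x) ha hb hab)⟩
  exact fun x => le_antisymm (le_of_saddle_values hα0 hα1 hpnn hpsum hp hm x)
    (le_of_saddle_values hα0 hα1 hpnn hpsum hm hp x)
end

section
/- Let $S$ be a nonempty finite set, $U_1, U_2 \subseteq \mathbb{R}$ nonempty compact sets, $\alpha \in [0,1)$, and suppose the transition probabilities and cost are separable in the controls: $p(x,y|r_1,r_2) = p^1(x,y,r_1) + p^2(x,y,r_2)$ and $c(x,r_1,r_2) = c^1(x,r_1) + c^2(x,r_2)$, where $p^1, p^2$ are continuous in the control variable, $p(x,y|r_1,r_2) \ge 0$, $\sum_{y \in S} p(x,y|r_1,r_2) = 1$, and $c^1(x,\cdot), c^2(x,\cdot)$ are continuous. Let $V^+$ be the unique fixed point of the upper Bellman operator $T^+$ and $V^-$ the unique fixed point of the lower Bellman operator $T^-$. Then $V^+(x) = V^-(x)$ for all $x \in S$, i.e. the discrete Markov game has a saddle point. -/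
/-- For a separable payoff, pure saddle points exist and both iterated optima, in the
`sInf`/`sSup` form used by the Bellman operators, equal the payoff there. -/
theorem exists_saddle_of_separable {U1 U2 : Set ℝ} (hU1ne : U1.Nonempty) (hU1cp : IsCompact U1)
    (hU2ne : U2.Nonempty) (hU2cp : IsCompact U2) {f g : ℝ → ℝ}
    (hf : ContinuousOn f U1) (hg : ContinuousOn g U2) :
    ∃ s1 ∈ U1, ∃ s2 ∈ U2, (∀ r1 ∈ U1, f s1 ≤ f r1) ∧ (∀ r2 ∈ U2, g r2 ≤ g s2) ∧
      sInf {z | ∃ r1 ∈ U1, z = sSup {w | ∃ r2 ∈ U2, w = f r1 + g r2}} = f s1 + g s2 ∧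
      sSup {z | ∃ r2 ∈ U2, z = sInf {w | ∃ r1 ∈ U1, w = f r1 + g r2}} = f s1 + g s2 := by
  obtain ⟨s1, hs1, hmin⟩ := hU1cp.exists_isMinOn hU1ne hf
  obtain ⟨s2, hs2, hmax⟩ := hU2cp.exists_isMaxOn hU2ne hg
  have hmin' : ∀ r1 ∈ U1, f s1 ≤ f r1 := fun r hr => hmin hr
  have hmax' : ∀ r2 ∈ U2, g r2 ≤ g s2 := fun r hr => hmax hr
  have hsup (a : ℝ) : sSup {w | ∃ r2 ∈ U2, w = a + g r2} = a + g s2 := by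
    refine IsGreatest.csSup_eq ⟨⟨s2, hs2, rfl⟩, ?_⟩
    rintro _ ⟨r, hr, rfl⟩
    linarith [hmax' r hr]
  have hinf (b : ℝ) : sInf {w | ∃ r1 ∈ U1, w = f r1 + b} = f s1 + b := by
    refine IsLeast.csInf_eq ⟨⟨s1, hs1, rfl⟩, ?_⟩
    rintro _ ⟨r, hr, rfl⟩
    linarith [hmin' r hr]
  refine ⟨s1, hs1, s2, hs2, hmin', hmax', ?_, ?_⟩
  · simp only [hsup]
    exact hinf _
  · simp only [hinf]
    exact hsup _

/-- Under separability both Bellman operators take, at each `V` and `x`, the payoff of a common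
saddle point of the one-stage game. -/
theorem exists_saddle_bellman {S : Type*} [Fintype S] {U1 U2 : Set ℝ}
    (hU1ne : U1.Nonempty) (hU1cp : IsCompact U1) (hU2ne : U2.Nonempty) (hU2cp : IsCompact U2)
    (α : ℝ) {p1 p2 : S → S → ℝ → ℝ}
    (hp1cont : ∀ x y, ContinuousOn (p1 x y) U1) (hp2cont : ∀ x y, ContinuousOn (p2 x y) U2)
    {c1 c2 : S → ℝ → ℝ}
    (hc1cont : ∀ x, ContinuousOn (c1 x) U1) (hc2cont : ∀ x, ContinuousOn (c2 x) U2)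
    (V : S → ℝ) (x : S) :
    ∃ v : ℝ, upperBellman U1 U2 α (fun x y r1 r2 => p1 x y r1 + p2 x y r2)
        (fun x r1 r2 => c1 x r1 + c2 x r2) V x = v ∧
      lowerBellman U1 U2 α (fun x y r1 r2 => p1 x y r1 + p2 x y r2)
        (fun x r1 r2 => c1 x r1 + c2 x r2) V x = v ∧
      (∃ s1 ∈ U1, ∀ r2 ∈ U2, c1 x s1 + c2 x r2 + α * ∑ y, (p1 x y s1 + p2 x y r2) * V y ≤ v) ∧
      (∃ s2 ∈ U2, ∀ r1 ∈ U1,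
        v ≤ c1 x r1 + c2 x s2 + α * ∑ y, (p1 x y r1 + p2 x y s2) * V y) := by
  have hsplit (r1 r2 : ℝ) : c1 x r1 + c2 x r2 + α * ∑ y, (p1 x y r1 + p2 x y r2) * V y =
      (c1 x r1 + α * ∑ y, p1 x y r1 * V y) + (c2 x r2 + α * ∑ y, p2 x y r2 * V y) := by
    simp only [add_mul, Finset.sum_add_distrib]
    ring
  have hf : ContinuousOn (fun r => c1 x r + α * ∑ y, p1 x y r * V y) U1 := by
    fun_prop
  have hg : ContinuousOn (fun r => c2 x r + α * ∑ y, p2 x y r * V y) U2 := by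
    fun_prop
  obtain ⟨s1, hs1, s2, hs2, hmin, hmax, hupper, hlower⟩ :=
    exists_saddle_of_separable hU1ne hU1cp hU2ne hU2cp hf hg
  simp only [upperBellman, lowerBellman, hsplit]
  exact ⟨_, hupper, hlower, ⟨s1, hs1, fun r hr => by linarith [hmax r hr]⟩,
    ⟨s2, hs2, fun r hr => by linarith [hmin r hr]⟩⟩

/-- Comparison principle: if at every state the maximizer has a control guaranteeing at least `V`
and the minimizer has one guaranteeing at most `W`, then `V ≤ W`. -/
theorem le_of_guarantees {S : Type*} [Fintype S] [Nonempty S] {U1 U2 : Set ℝ}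
    {α : ℝ} (hα0 : 0 ≤ α) (hα1 : α < 1) {p : S → S → ℝ → ℝ → ℝ} {c : S → ℝ → ℝ → ℝ}
    (hpnn : ∀ x y, ∀ r1 ∈ U1, ∀ r2 ∈ U2, 0 ≤ p x y r1 r2)
    (hpsum : ∀ x, ∀ r1 ∈ U1, ∀ r2 ∈ U2, ∑ y, p x y r1 r2 = 1) {V W : S → ℝ}
    (hV : ∀ x, ∃ s2 ∈ U2, ∀ r1 ∈ U1, V x ≤ c x r1 s2 + α * ∑ y, p x y r1 s2 * V y)
    (hW : ∀ x, ∃ s1 ∈ U1, ∀ r2 ∈ U2, c x s1 r2 + α * ∑ y, p x y s1 r2 * W y ≤ W x) (x : S) :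
    V x ≤ W x := by
  obtain ⟨m, hm⟩ := Finite.exists_max (fun x => V x - W x)
  obtain ⟨s2, hs2, h2⟩ := hV m
  obtain ⟨s1, hs1, h1⟩ := hW m
  have hsum : ∑ y, p m y s1 s2 * V y - ∑ y, p m y s1 s2 * W y ≤ V m - W m := by
    calc ∑ y, p m y s1 s2 * V y - ∑ y, p m y s1 s2 * W y
        = ∑ y, p m y s1 s2 * (V y - W y) := by simp only [mul_sub, Finset.sum_sub_distrib]
      _ ≤ ∑ y, p m y s1 s2 * (V m - W m) := Finset.sum_le_sum fun y _ =>
          mul_le_mul_of_nonneg_left (hm y) (hpnn m y s1 hs1 s2 hs2)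
      _ = V m - W m := by rw [← Finset.sum_mul, hpsum m s1 hs1 s2 hs2, one_mul]
  have hcontr : V m - W m ≤ α * (V m - W m) := by
    linarith [h1 s2 hs2, h2 s1 hs1, mul_le_mul_of_nonneg_left hsum hα0]
  have hm0 : V m - W m ≤ 0 := by nlinarith
  linarith [hm x]

/-- **Existence of saddle points under separability (H1)** (Theorem 1 of the paper,
discounted form).  If `p(x,y|r1,r2) = p¹(x,y,r1) + p²(x,y,r2)` and
`c(x,r1,r2) = c¹(x,r1) + c²(x,r2)` with each summand continuous in its control
variable, then the unique fixed points of the upper and lower Bellman operators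
coincide: the discrete Markov game has a saddle point. -/
theorem discrete_markov_game_saddle_point_separable
    {S : Type*} [Fintype S] [Nonempty S]
    (U1 U2 : Set ℝ)
    (hU1ne : U1.Nonempty) (hU1cp : IsCompact U1)
    (hU2ne : U2.Nonempty) (hU2cp : IsCompact U2)
    (α : ℝ) (hα0 : 0 ≤ α) (hα1 : α < 1)
    (p1 p2 : S → S → ℝ → ℝ)
    (hp1cont : ∀ x y, ContinuousOn (p1 x y) U1)
    (hp2cont : ∀ x y, ContinuousOn (p2 x y) U2)
    (hpnn : ∀ x y, ∀ r1 ∈ U1, ∀ r2 ∈ U2, 0 ≤ p1 x y r1 + p2 x y r2)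
    (hpsum : ∀ x, ∀ r1 ∈ U1, ∀ r2 ∈ U2, (∑ y, (p1 x y r1 + p2 x y r2)) = 1)
    (c1 c2 : S → ℝ → ℝ)
    (hc1cont : ∀ x, ContinuousOn (c1 x) U1)
    (hc2cont : ∀ x, ContinuousOn (c2 x) U2)
    (Vp Vm : S → ℝ)
    (hVp : upperBellman U1 U2 α (fun x y r1 r2 => p1 x y r1 + p2 x y r2)
        (fun x r1 r2 => c1 x r1 + c2 x r2) Vp = Vp)
    (hVm : lowerBellman U1 U2 α (fun x y r1 r2 => p1 x y r1 + p2 x y r2)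
        (fun x r1 r2 => c1 x r1 + c2 x r2) Vm = Vm) :
    ∀ x : S, Vp x = Vm x := by
  have hP (x : S) : (∃ s1 ∈ U1, ∀ r2 ∈ U2,
        c1 x s1 + c2 x r2 + α * ∑ y, (p1 x y s1 + p2 x y r2) * Vp y ≤ Vp x) ∧
      (∃ s2 ∈ U2, ∀ r1 ∈ U1,
        Vp x ≤ c1 x r1 + c2 x s2 + α * ∑ y, (p1 x y r1 + p2 x y s2) * Vp y) := by
    obtain ⟨v, hv, -, h⟩ := exists_saddle_bellman hU1ne hU1cp hU2ne hU2cp α hp1cont hp2cont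
      hc1cont hc2cont Vp x
    rwa [← hv, hVp] at h
  have hM (x : S) : (∃ s1 ∈ U1, ∀ r2 ∈ U2,
        c1 x s1 + c2 x r2 + α * ∑ y, (p1 x y s1 + p2 x y r2) * Vm y ≤ Vm x) ∧
      (∃ s2 ∈ U2, ∀ r1 ∈ U1,
        Vm x ≤ c1 x r1 + c2 x s2 + α * ∑ y, (p1 x y r1 + p2 x y s2) * Vm y) := by
    obtain ⟨v, -, hv, h⟩ := exists_saddle_bellman hU1ne hU1cp hU2ne hU2cp α hp1cont hp2cont
      hc1cont hc2cont Vm x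
    rwa [← hv, hVm] at h
  intro x
  exact le_antisymm
    (le_of_guarantees (p := fun x y r1 r2 => p1 x y r1 + p2 x y r2)
      (c := fun x r1 r2 => c1 x r1 + c2 x r2) hα0 hα1 hpnn hpsum
      (fun x => (hP x).2) (fun x => (hM x).1) x)
    (le_of_guarantees (p := fun x y r1 r2 => p1 x y r1 + p2 x y r2)
      (c := fun x r1 r2 => c1 x r1 + c2 x r2) hα0 hα1 hpnn hpsum
      (fun x => (hM x).2) (fun x => (hP x).1) x)
end

section
/- Let $U_1$ and $U_2$ be nonempty compact metric spaces and $\phi : U_1 \times U_2 \to \mathbb{R}$ continuous. For Borel probability measures $\mu_i$ write $\phi(\mu_1,\mu_2) = \int\int \phi \, d\mu_1 d\mu_2$. Then for every $\varepsilon > 0$ there exist nonempty finite subsets $U_1^\varepsilon \subseteq U_1$ and $U_2^\varepsilon \subseteq U_2$ such that $\big| \inf_{\mu_1 \in \mathcal{P}(U_1)} \sup_{\mu_2 \in \mathcal{P}(U_2)} \phi(\mu_1,\mu_2) - \min_{\mu_1 \in \mathcal{P}(U_1^\varepsilon)} \max_{\mu_2 \in \mathcal{P}(U_2^\varepsilon)}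 \phi(\mu_1,\mu_2) \big| < \varepsilon$ and $\big| \sup_{\mu_2 \in \mathcal{P}(U_2)} \inf_{\mu_1 \in \mathcal{P}(U_1)} \phi(\mu_1,\mu_2) - \max_{\mu_2 \in \mathcal{P}(U_2^\varepsilon)} \min_{\mu_1 \in \mathcal{P}(U_1^\varepsilon)} \phi(\mu_1,\mu_2) \big| < \varepsilon$, where $\mathcal{P}(F)$ for a finite subset $F$ denotes the probability measures supported on $F$. -/
open MeasureTheory

/-!
The proof discretises both players at once. Uniform continuity gives a scale `δ` below which `φ`
varies by at most `η = ε / 2` in each variable, and `exists_finite_projection` gives measurable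
maps `Tᵢ : Uᵢ → Uᵢ` with finite range `Fᵢ` moving every point by less than `δ`. Pushing a measure
forward along `Tᵢ` produces a measure carried by `Fᵢ` and changes the mixed payoff by at most `η`
(`abs_payoff_map_left_le`, `abs_payoff_map_right_le`). A purely order-theoretic lemma,
`abs_infSup_sub_le`, then shows that the two inf-sup values differ by at most `η`.

The restricted minimax is attained because the inner maximum over measures carried by `F₂` is
`max_{r₂ ∈ F₂} ∫ φ(·, r₂) dμ₁` (`isGreatest_payoff`), which is weakly continuous in `μ₁`, while
the measures carried by `F₁` form a closed subset of the weakly compact space of probability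
measures. The sup-inf claim is the inf-sup claim for `(r₂, r₁) ↦ -φ r₁ r₂`, by Fubini.
-/

section OrderLemmas

variable {A B : Type*}

/-- Restricting both players of a bounded game to the strategies satisfying `pA`, `pB` changes the
inf-sup value by at most `η`, provided every strategy can be replaced by a restricted one at cost
at most `η`, uniformly in the strategy of the opponent. -/
lemma abs_infSup_sub_le [Nonempty A] [Nonempty B] (Φ : A → B → ℝ) (pA : A → Prop) (pB : B → Prop)
    (P : A → A) (Q : B → B) (hPA : ∀ a, pA (P a)) (hQB : ∀ b, pB (Q b)) (C η : ℝ)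
    (hC : ∀ a b, |Φ a b| ≤ C)
    (hP : ∀ a b, |Φ (P a) b - Φ a b| ≤ η) (hQ : ∀ a b, |Φ a (Q b) - Φ a b| ≤ η)
    (hex : ∀ a, ∃ z, IsGreatest {w | ∃ b, pB b ∧ w = Φ a b} z) (v : ℝ)
    (hv : IsLeast {z | ∃ a, pA a ∧ IsGreatest {w | ∃ b, pB b ∧ w = Φ a b} z} v) :
    |sInf {z | ∃ a, z = sSup {w | ∃ b, w = Φ a b}} - v| ≤ η := by
  have hbdd : ∀ a, BddAbove {w | ∃ b, w = Φ a b} := by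
    intro a
    refine ⟨C, ?_⟩
    rintro w ⟨b, rfl⟩
    exact (abs_le.1 (hC a b)).2
  have hle : ∀ a b, Φ a b ≤ sSup {w | ∃ b, w = Φ a b} := fun a b => le_csSup (hbdd a) ⟨b, rfl⟩
  obtain ⟨b₀⟩ := ‹Nonempty B›
  have hbelow : BddBelow {z | ∃ a, z = sSup {w | ∃ b, w = Φ a b}} := by
    refine ⟨-C, ?_⟩
    rintro z ⟨a, rfl⟩
    exact (abs_le.1 (hC a b₀)).1.trans (hle a b₀)
  have h1 : v - η ≤ sInf {z | ∃ a, z = sSup {w | ∃ b, w = Φ a b}} := by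
    obtain ⟨a₀⟩ := ‹Nonempty A›
    refine le_csInf ⟨_, a₀, rfl⟩ ?_
    rintro z ⟨a, rfl⟩
    obtain ⟨z, hz⟩ := hex (P a)
    have hvz : v ≤ z := hv.2 ⟨P a, hPA a, hz⟩
    obtain ⟨b, -, rfl⟩ := hz.1
    have := (abs_le.1 (hP a b)).2
    have := hle a b
    linarith
  have h2 : sInf {z | ∃ a, z = sSup {w | ∃ b, w = Φ a b}} ≤ v + η := by
    obtain ⟨a, -, ha⟩ := hv.1
    refine (csInf_le hbelow ⟨a, rfl⟩).trans (csSup_le ⟨_, b₀, rfl⟩ ?_)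
    rintro w ⟨b, rfl⟩
    have : Φ a (Q b) ≤ v := ha.2 ⟨Q b, hQB b, rfl⟩
    have := (abs_le.1 (hQ a b)).1
    linarith
  exact abs_le.2 ⟨by linarith, by linarith⟩

lemma isLeast_neg_iff {S : Set ℝ} {x : ℝ} : IsLeast (-S) x ↔ IsGreatest S (-x) := by
  constructor
  · rintro ⟨h, h'⟩
    exact ⟨h, fun y hy => le_neg.1 (h' (by simpa using hy))⟩
  · rintro ⟨h, h'⟩
    exact ⟨h, fun y hy => neg_le_neg_iff.1 (h' hy)⟩

lemma isGreatest_maxMin_of_neg (Φ : A → B → ℝ) (pA : A → Prop) (pB : B → Prop) (v : ℝ)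
    (hv : IsLeast {z | ∃ b, pB b ∧ IsGreatest {w | ∃ a, pA a ∧ w = -Φ a b} z} v) :
    IsGreatest {z | ∃ b, pB b ∧ IsLeast {w | ∃ a, pA a ∧ w = Φ a b} z} (-v) := by
  rw [← isLeast_neg_iff]
  convert hv using 1
  ext z
  simp only [Set.mem_neg, Set.mem_ofPred_eq]
  refine exists_congr fun b => and_congr_right fun _ => ?_
  rw [show {w | ∃ a, pA a ∧ w = Φ a b} = -{w | ∃ a, pA a ∧ w = -Φ a b} by
    ext w; simp [neg_inj], isLeast_neg_iff, neg_neg]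

lemma supInf_eq_neg (Φ : A → B → ℝ) :
    sSup {z | ∃ b, z = sInf {w | ∃ a, w = Φ a b}}
      = -sInf {z | ∃ b, z = sSup {w | ∃ a, w = -Φ a b}} := by
  rw [Real.sInf_def, neg_neg]
  congr 1
  ext z
  simp only [Set.mem_neg, Set.mem_ofPred_eq]
  refine exists_congr fun b => ?_
  rw [Real.sInf_def, show -{w | ∃ a, w = Φ a b} = {w | ∃ a, w = -Φ a b} by
    ext w; simp [neg_eq_iff_eq_neg], neg_eq_iff_eq_neg]

end OrderLemmas

/-- A compact metric space has, at every scale, a Borel map with finite range that is uniformly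
close to the identity. -/
lemma exists_finite_projection (U : Type*) [MetricSpace U] [CompactSpace U] [Nonempty U]
    [MeasurableSpace U] [BorelSpace U] (δ : ℝ) (hδ : 0 < δ) :
    ∃ (F : Finset U) (T : U → U), F.Nonempty ∧ Measurable T ∧ (∀ x, T x ∈ F) ∧
      ∀ x, dist (T x) x < δ := by
  classical
  let e := TopologicalSpace.denseSeq U
  have hcov : (Set.univ : Set U) ⊆ ⋃ n, Metric.ball (e n) δ := by
    intro x _
    obtain ⟨n, hn⟩ := (TopologicalSpace.denseRange_denseSeq U).exists_dist_lt x hδ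
    exact Set.mem_iUnion.2 ⟨n, hn⟩
  obtain ⟨t, ht⟩ := isCompact_univ.elim_finite_subcover _ (fun n => Metric.isOpen_ball) hcov
  let N := t.sup id
  refine ⟨(Finset.range (N + 1)).image e, SimpleFunc.nearestPt e N, by simp,
    SimpleFunc.measurable _, fun x => ?_, fun x => ?_⟩
  · exact Finset.mem_image.2 ⟨SimpleFunc.nearestPtInd e N x,
      Finset.mem_range.2 (Nat.lt_succ_of_le (SimpleFunc.nearestPtInd_le e N x)), rfl⟩
  · obtain ⟨n, hn, hx⟩ := Set.mem_iUnion₂.1 (ht (Set.mem_univ x))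
    have h := SimpleFunc.edist_nearestPt_le e x (Finset.le_sup (f := id) hn : n ≤ N)
    rw [edist_dist, edist_dist, ENNReal.ofReal_le_ofReal_iff dist_nonneg] at h
    exact h.trans_lt (by simpa [dist_comm] using hx)

lemma abs_integral_sub_le {U : Type*} [MeasurableSpace U] {f g : U → ℝ} {η : ℝ} {μ : Measure U} [IsProbabilityMeasure μ]
    (hf : Integrable f μ) (hg : Integrable g μ) (h : ∀ x, |f x - g x| ≤ η) :
    |∫ x, f x ∂μ - ∫ x, g x ∂μ| ≤ η := by
  rw [← integral_sub hf hg]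
  simpa using norm_integral_le_of_norm_le_const (μ := μ) (f := fun x => f x - g x) (C := η)
    (Filter.Eventually.of_forall h)

lemma abs_payoff_le {U1 U2 : Type*} [MeasurableSpace U1] [MeasurableSpace U2]
    {φ : U1 → U2 → ℝ} {C : ℝ} (hC : ∀ r1 r2, |φ r1 r2| ≤ C)
    (μ1 : Measure U1) [IsProbabilityMeasure μ1] (μ2 : Measure U2) [IsProbabilityMeasure μ2] :
    |∫ r1, ∫ r2, φ r1 r2 ∂μ2 ∂μ1| ≤ C := by
  have h : ∀ r1, ‖∫ r2, φ r1 r2 ∂μ2‖ ≤ C := fun r1 => by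
    simpa using norm_integral_le_of_norm_le_const (μ := μ2) (f := φ r1)
      (Filter.Eventually.of_forall fun r2 => hC r1 r2)
  simpa using norm_integral_le_of_norm_le_const (μ := μ1) (Filter.Eventually.of_forall h)

lemma continuous_innerIntegral {U1 U2 : Type*} [MetricSpace U1] [CompactSpace U1]
    [MetricSpace U2] [CompactSpace U2] [MeasurableSpace U2] [BorelSpace U2]
    {φ : U1 → U2 → ℝ} (hφ : Continuous fun p : U1 × U2 => φ p.1 p.2)
    (μ : Measure U2) [IsFiniteMeasure μ] : Continuous fun r1 => ∫ r2, φ r1 r2 ∂μ := by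
  simpa using continuous_parametric_integral_of_continuous (μ := μ) (f := φ) hφ isCompact_univ

section Payoff

variable {U1 U2 : Type*}
  [MetricSpace U1] [CompactSpace U1] [MeasurableSpace U1] [BorelSpace U1]
  [MetricSpace U2] [CompactSpace U2] [MeasurableSpace U2] [BorelSpace U2]

lemma integrable_of_continuous {f : U1 → ℝ} (hf : Continuous f) (μ : Measure U1)
    [IsFiniteMeasure μ] : Integrable f μ :=
  hf.integrable_of_hasCompactSupport (HasCompactSupport.of_compactSpace f)

lemma payoff_swap {φ : U1 → U2 → ℝ} (hφ : Continuous fun p : U1 × U2 => φ p.1 p.2)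
    (μ1 : Measure U1) [IsFiniteMeasure μ1] (μ2 : Measure U2) [IsFiniteMeasure μ2] :
    ∫ r1, ∫ r2, φ r1 r2 ∂μ2 ∂μ1 = ∫ r2, ∫ r1, φ r1 r2 ∂μ1 ∂μ2 :=
  integral_integral_swap (integrable_of_continuous hφ _)

lemma abs_payoff_map_left_le {φ : U1 → U2 → ℝ} (hφ : Continuous fun p : U1 × U2 => φ p.1 p.2)
    {T : U1 → U1} (hT : Measurable T) {η : ℝ} (h : ∀ r1 r2, |φ (T r1) r2 - φ r1 r2| ≤ η)
    (μ1 : Measure U1) [IsProbabilityMeasure μ1] (μ2 : Measure U2) [IsProbabilityMeasure μ2] :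
    |∫ r1, ∫ r2, φ r1 r2 ∂μ2 ∂(μ1.map T) - ∫ r1, ∫ r2, φ r1 r2 ∂μ2 ∂μ1| ≤ η := by
  have hc := continuous_innerIntegral hφ μ2
  have := Measure.isProbabilityMeasure_map (μ := μ1) hT.aemeasurable
  rw [integral_map hT.aemeasurable hc.aestronglyMeasurable]
  refine abs_integral_sub_le ((integrable_of_continuous hc (μ1.map T)).comp_measurable hT)
    (integrable_of_continuous hc _) fun r1 => ?_
  have hs : ∀ r, Integrable (φ r) μ2 := fun r =>
    integrable_of_continuous (hφ.comp (Continuous.prodMk_right r)) μ2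
  exact abs_integral_sub_le (hs _) (hs _) (h r1)

lemma abs_payoff_map_right_le {φ : U1 → U2 → ℝ} (hφ : Continuous fun p : U1 × U2 => φ p.1 p.2)
    {T : U2 → U2} (hT : Measurable T) {η : ℝ} (h : ∀ r1 r2, |φ r1 (T r2) - φ r1 r2| ≤ η)
    (μ1 : Measure U1) [IsProbabilityMeasure μ1] (μ2 : Measure U2) [IsProbabilityMeasure μ2] :
    |∫ r1, ∫ r2, φ r1 r2 ∂(μ2.map T) ∂μ1 - ∫ r1, ∫ r2, φ r1 r2 ∂μ2 ∂μ1| ≤ η := by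
  have := Measure.isProbabilityMeasure_map (μ := μ2) hT.aemeasurable
  rw [payoff_swap hφ, payoff_swap hφ]
  exact abs_payoff_map_left_le (φ := fun r2 r1 => φ r1 r2) (hφ.comp continuous_swap) hT
    (fun r2 r1 => h r1 r2) μ2 μ1

/-- The best reply among measures carried by `F2` is a Dirac mass at a point of `F2`. -/
lemma isGreatest_payoff {φ : U1 → U2 → ℝ} (hφ : Continuous fun p : U1 × U2 => φ p.1 p.2)
    {F2 : Finset U2} (hF : F2.Nonempty) (μ1 : ProbabilityMeasure U1) :
    IsGreatest {w | ∃ μ2 : ProbabilityMeasure U2, (μ2 : Measure U2) (↑F2 : Set U2) = 1 ∧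
        w = ∫ r1, ∫ r2, φ r1 r2 ∂(μ2 : Measure U2) ∂(μ1 : Measure U1)}
      (F2.sup' hF fun r2 => ∫ r1, φ r1 r2 ∂(μ1 : Measure U1)) := by
  constructor
  · obtain ⟨r, hr, he⟩ := F2.exists_mem_eq_sup' hF fun r2 => ∫ r1, φ r1 r2 ∂(μ1 : Measure U1)
    refine ⟨⟨Measure.dirac r, inferInstance⟩, ?_, ?_⟩
    · exact Measure.dirac_apply_of_mem hr
    · simp [he]
  · rintro w ⟨μ2, h2, rfl⟩
    rw [payoff_swap hφ]
    have hae : ∀ᵐ r2 ∂(μ2 : Measure U2), r2 ∈ (↑F2 : Set U2) :=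
      (prob_compl_eq_zero_iff F2.measurableSet).2 h2
    have hc := continuous_innerIntegral (φ := fun r2 r1 => φ r1 r2) (hφ.comp continuous_swap)
      (μ1 : Measure U1)
    calc ∫ r2, ∫ r1, φ r1 r2 ∂(μ1 : Measure U1) ∂(μ2 : Measure U2)
        ≤ ∫ _, (F2.sup' hF fun r2 => ∫ r1, φ r1 r2 ∂(μ1 : Measure U1)) ∂(μ2 : Measure U2) := by
          refine integral_mono_ae (integrable_of_continuous hc _) (integrable_const _) ?_
          filter_upwards [hae] with r2 hr2
          exact Finset.le_sup' (fun r2 => ∫ r1, φ r1 r2 ∂(μ1 : Measure U1)) hr2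
      _ = _ := by simp

/-- Being carried by `F` means integrating the continuous function `infDist · F` to zero, hence is
a weakly closed condition. -/
lemma isClosed_carried {F : Finset U1} (hF : F.Nonempty) :
    IsClosed {μ : ProbabilityMeasure U1 | (μ : Measure U1) (↑F : Set U1) = 1} := by
  let f : C(U1, ℝ) := ⟨fun x => Metric.infDist x (F : Set U1), Metric.continuous_infDist_pt _⟩
  have hset : {μ : ProbabilityMeasure U1 | (μ : Measure U1) (↑F : Set U1) = 1}
      = (fun μ : ProbabilityMeasure U1 => ∫ x, f x ∂(μ : Measure U1)) ⁻¹' {0} := by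
    ext μ
    rw [Set.mem_preimage, Set.mem_singleton_iff, integral_eq_zero_iff_of_nonneg (f := f)
      (fun x => Metric.infDist_nonneg) (integrable_of_continuous f.continuous _),
      Set.mem_ofPred_eq, ← prob_compl_eq_zero_iff F.measurableSet]
    have : ∀ x, f x = 0 ↔ x ∈ (F : Set U1) := fun x =>
      (F.finite_toSet.isClosed.mem_iff_infDist_zero hF).symm
    simp only [Filter.EventuallyEq, Pi.zero_apply, this]
    rfl
  rw [hset]
  exact isClosed_singleton.preimage (ProbabilityMeasure.continuous_integral_continuousMap f)

lemma exists_isLeast_payoff {φ : U1 → U2 → ℝ} (hφ : Continuous fun p : U1 × U2 => φ p.1 p.2)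
    {F1 : Finset U1} {F2 : Finset U2} (h1 : F1.Nonempty) (h2 : F2.Nonempty) :
    ∃ v, IsLeast {z | ∃ μ1 : ProbabilityMeasure U1, (μ1 : Measure U1) (↑F1 : Set U1) = 1 ∧
      IsGreatest {w | ∃ μ2 : ProbabilityMeasure U2, (μ2 : Measure U2) (↑F2 : Set U2) = 1 ∧
        w = ∫ r1, ∫ r2, φ r1 r2 ∂(μ2 : Measure U2) ∂(μ1 : Measure U1)} z} v := by
  let g : ProbabilityMeasure U1 → ℝ :=
    fun μ1 => F2.sup' h2 fun r2 => ∫ r1, φ r1 r2 ∂(μ1 : Measure U1)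
  have hg : Continuous g := by
    refine Continuous.finset_sup'_apply h2 fun r2 _ => ?_
    exact ProbabilityMeasure.continuous_integral_continuousMap
      (⟨fun r1 => φ r1 r2, hφ.comp (Continuous.prodMk_left r2)⟩ : C(U1, ℝ))
  have hne : {μ : ProbabilityMeasure U1 | (μ : Measure U1) (↑F1 : Set U1) = 1}.Nonempty := by
    obtain ⟨r, hr⟩ := h1
    exact ⟨⟨Measure.dirac r, inferInstance⟩, Measure.dirac_apply_of_mem hr⟩
  obtain ⟨v, hv⟩ := ((isClosed_carried h1).isCompact.image hg).exists_isLeast (hne.image g)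
  refine ⟨v, (congrArg (fun S => IsLeast S v) (Set.ext fun z => ?_)).mpr hv⟩
  refine exists_congr fun μ1 => and_congr_right fun _ => ?_
  have hm := isGreatest_payoff hφ h2 μ1
  exact ⟨fun h => hm.unique h, fun h => h ▸ hm⟩

/-- The inf-sup claim, for finite sets `F1`, `F2` onto which the maps `T1`, `T2` project at
cost at most `η`. -/
lemma infSup_approx [Nonempty U1] [Nonempty U2] {φ : U1 → U2 → ℝ}
    (hφ : Continuous fun p : U1 × U2 => φ p.1 p.2) {F1 : Finset U1} {F2 : Finset U2}
    (h1 : F1.Nonempty) (h2 : F2.Nonempty) {T1 : U1 → U1} {T2 : U2 → U2}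
    (hT1 : Measurable T1) (hT2 : Measurable T2) (hF1 : ∀ x, T1 x ∈ F1) (hF2 : ∀ x, T2 x ∈ F2)
    {η : ℝ} (hη1 : ∀ r1 r2, |φ (T1 r1) r2 - φ r1 r2| ≤ η)
    (hη2 : ∀ r1 r2, |φ r1 (T2 r2) - φ r1 r2| ≤ η) :
    ∃ v, IsLeast {z | ∃ μ1 : ProbabilityMeasure U1, (μ1 : Measure U1) (↑F1 : Set U1) = 1 ∧
      IsGreatest {w | ∃ μ2 : ProbabilityMeasure U2, (μ2 : Measure U2) (↑F2 : Set U2) = 1 ∧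
        w = ∫ r1, ∫ r2, φ r1 r2 ∂(μ2 : Measure U2) ∂(μ1 : Measure U1)} z} v ∧
      |sInf {z | ∃ μ1 : ProbabilityMeasure U1, z = sSup {w | ∃ μ2 : ProbabilityMeasure U2,
        w = ∫ r1, ∫ r2, φ r1 r2 ∂(μ2 : Measure U2) ∂(μ1 : Measure U1)}} - v| ≤ η := by
  obtain ⟨v, hv⟩ := exists_isLeast_payoff hφ h1 h2
  refine ⟨v, hv, ?_⟩
  obtain ⟨C, hC⟩ := isCompact_univ.exists_bound_of_continuousOn hφ.continuousOn
  have : Nonempty (ProbabilityMeasure U1) :=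
    ‹Nonempty U1›.map fun r => ⟨Measure.dirac r, inferInstance⟩
  have : Nonempty (ProbabilityMeasure U2) :=
    ‹Nonempty U2›.map fun r => ⟨Measure.dirac r, inferInstance⟩
  refine abs_infSup_sub_le
    (fun (μ1 : ProbabilityMeasure U1) (μ2 : ProbabilityMeasure U2) =>
      ∫ r1, ∫ r2, φ r1 r2 ∂(μ2 : Measure U2) ∂(μ1 : Measure U1))
    (fun μ1 => (μ1 : Measure U1) (↑F1 : Set U1) = 1)
    (fun μ2 => (μ2 : Measure U2) (↑F2 : Set U2) = 1)
    (fun μ1 => μ1.map hT1.aemeasurable) (fun μ2 => μ2.map hT2.aemeasurable)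
    (fun μ1 => ?_) (fun μ2 => ?_) C η
    (fun μ1 μ2 => abs_payoff_le (fun r1 r2 => hC (r1, r2) (Set.mem_univ _)) _ _)
    (fun μ1 μ2 => abs_payoff_map_left_le hφ hT1 hη1 _ _)
    (fun μ1 μ2 => abs_payoff_map_right_le hφ hT2 hη2 _ _)
    (fun μ1 => ⟨_, isGreatest_payoff hφ h2 μ1⟩) v hv
  · rw [ProbabilityMeasure.toMeasure_map, Measure.map_apply hT1 F1.measurableSet,
      show T1 ⁻¹' (F1 : Set U1) = Set.univ from Set.eq_univ_of_forall hF1, measure_univ]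
  · rw [ProbabilityMeasure.toMeasure_map, Measure.map_apply hT2 F2.measurableSet,
      show T2 ⁻¹' (F2 : Set U2) = Set.univ from Set.eq_univ_of_forall hF2, measure_univ]

end Payoff

/-- **Finite-support approximation of the mixed minimax values** (equations (rsad-2)
and (rsad-3) in the proof of Theorem 2).  For nonempty compact metric spaces `U1`,
`U2` and continuous `φ`, for every `ε > 0` there are nonempty finite subsets
`U1ᵋ ⊆ U1`, `U2ᵋ ⊆ U2` such that the inf-sup (resp. sup-inf) of the mixed extension
over all Borel probability measures is within `ε` of the attained min-max
(resp. max-min) over probability measures supported on the finite subsets. -/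
theorem relaxed_minimax_finite_support_approximation
    {U1 U2 : Type*}
    [MetricSpace U1] [CompactSpace U1] [Nonempty U1]
    [MeasurableSpace U1] [BorelSpace U1]
    [MetricSpace U2] [CompactSpace U2] [Nonempty U2]
    [MeasurableSpace U2] [BorelSpace U2]
    (φ : U1 → U2 → ℝ)
    (hφ : Continuous fun p : U1 × U2 => φ p.1 p.2) :
    ∀ ε : ℝ, 0 < ε →
      ∃ F1 : Finset U1, ∃ F2 : Finset U2, F1.Nonempty ∧ F2.Nonempty ∧
        (∃ v1 : ℝ,
          IsLeast {z | ∃ μ1 : ProbabilityMeasure U1,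
              (μ1 : Measure U1) (↑F1 : Set U1) = 1 ∧
              IsGreatest {w | ∃ μ2 : ProbabilityMeasure U2,
                (μ2 : Measure U2) (↑F2 : Set U2) = 1 ∧
                w = ∫ r1, ∫ r2, φ r1 r2 ∂(μ2 : Measure U2) ∂(μ1 : Measure U1)} z}
            v1 ∧
          |sInf {z | ∃ μ1 : ProbabilityMeasure U1,
              z = sSup {w | ∃ μ2 : ProbabilityMeasure U2,
                w = ∫ r1, ∫ r2, φ r1 r2 ∂(μ2 : Measure U2) ∂(μ1 : Measure U1)}}
            - v1| < ε) ∧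
        (∃ v2 : ℝ,
          IsGreatest {z | ∃ μ2 : ProbabilityMeasure U2,
              (μ2 : Measure U2) (↑F2 : Set U2) = 1 ∧
              IsLeast {w | ∃ μ1 : ProbabilityMeasure U1,
                (μ1 : Measure U1) (↑F1 : Set U1) = 1 ∧
                w = ∫ r1, ∫ r2, φ r1 r2 ∂(μ2 : Measure U2) ∂(μ1 : Measure U1)} z}
            v2 ∧
          |sSup {z | ∃ μ2 : ProbabilityMeasure U2,
              z = sInf {w | ∃ μ1 : ProbabilityMeasure U1,
                w = ∫ r1, ∫ r2, φ r1 r2 ∂(μ2 : Measure U2) ∂(μ1 : Measure U1)}}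
            - v2| < ε) := by
  intro ε hε
  obtain ⟨δ, hδ, hu⟩ := Metric.uniformContinuous_iff.1
    (CompactSpace.uniformContinuous_of_continuous hφ) (ε / 2) (half_pos hε)
  obtain ⟨F1, T1, h1, hT1, hF1, hd1⟩ := exists_finite_projection U1 δ hδ
  obtain ⟨F2, T2, h2, hT2, hF2, hd2⟩ := exists_finite_projection U2 δ hδ
  have hη1 : ∀ r1 r2, |φ (T1 r1) r2 - φ r1 r2| ≤ ε / 2 := fun r1 r2 =>
    (hu (a := (T1 r1, r2)) (b := (r1, r2)) (by simpa [Prod.dist_eq, hδ] using hd1 r1)).le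
  have hη2 : ∀ r1 r2, |φ r1 (T2 r2) - φ r1 r2| ≤ ε / 2 := fun r1 r2 =>
    (hu (a := (r1, T2 r2)) (b := (r1, r2)) (by simpa [Prod.dist_eq, hδ] using hd2 r2)).le
  refine ⟨F1, F2, h1, h2, ?_, ?_⟩
  · obtain ⟨v, hv, hle⟩ := infSup_approx hφ h1 h2 hT1 hT2 hF1 hF2 hη1 hη2
    exact ⟨v, hv, by linarith⟩
  · obtain ⟨v, hv, hle⟩ := infSup_approx (φ := fun r2 r1 => -φ r1 r2)
      (hφ.comp continuous_swap).neg h2 h1 hT2 hT1 hF2 hF1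
      (fun r2 r1 => by rw [← neg_sub', abs_neg]; exact hη2 r1 r2)
      (fun r2 r1 => by rw [← neg_sub', abs_neg]; exact hη1 r1 r2)
    have hswap : ∀ (μ1 : ProbabilityMeasure U1) (μ2 : ProbabilityMeasure U2),
        ∫ r2, ∫ r1, -φ r1 r2 ∂(μ1 : Measure U1) ∂(μ2 : Measure U2)
          = -∫ r1, ∫ r2, φ r1 r2 ∂(μ2 : Measure U2) ∂(μ1 : Measure U1) := fun μ1 μ2 => by
      simp only [integral_neg]
      rw [payoff_swap hφ]
    simp only [hswap] at hv hle
    refine ⟨-v, isGreatest_maxMin_of_neg _ _ _ v hv, ?_⟩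
    rw [supInf_eq_neg, ← neg_sub', abs_neg]
    linarith
end

section
/- Let $S$ be a nonempty finite set, $U_1, U_2 \subseteq \mathbb{R}$ nonempty compact sets, $\alpha \in [0,1)$, $p : S \times S \times U_1 \times U_2 \to \mathbb{R}$ with $p(x,y|r_1,r_2) \ge 0$, $\sum_{y \in S} p(x,y|r_1,r_2) = 1$, continuous in $(r_1,r_2)$, and $c : S \times U_1 \times U_2 \to \mathbb{R}$ continuous in $(r_1,r_2)$. Define the relaxed upper Bellman operator $(T_m^+V)(x) = \inf_{\mu_1 \in \mathcal{P}(U_1)} \sup_{\mu_2 \in \mathcal{P}(U_2)} \int\int \big[ c(x,r_1,r_2) + \alpha \sum_{y \in S} p(x,y|r_1,r_2) V(y) \big] d\mu_1(r_1) d\mu_2(r_2)$ and the relaxed lower Bellman operator $T_m^-$ with $\sup_{\mu_2}\inf_{\mu_1}$ in place of $\inf_{\mu_1}\sup_{\mu_2}$. Then each operator is a contraction with constant $\alpha$ in the sup norm, each has a unique fixed point $V_m^+$ (resp. $V_m^-$), and $V_m^+(x) = V_m^-(x)$ for all $x \in S$; i.e. in relaxed controls the discrete Markov game always has a saddle point under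 continuity alone. -/
/-!
By Sion's minimax theorem the one-stage game with a continuous kernel on `U1 × U2` has a saddle
point in mixed strategies (`exists_saddle`). At a saddle point the inf-sup and the sup-inf are
both attained and equal the saddle value (`sInf_sSup_eq_of_saddle`, `sSup_sInf_eq_of_saddle`), so
the two relaxed Bellman operators are the same operator. Saddle values are monotone in the payoff
and commute with adding constants (`saddle_value_le_add`); since each `p x · r1 r2` is a probability
vector, replacing `W` by `V` raises the payoff by at most `α * dist V W`, which makes the common
operator an `α`-contraction of `S → ℝ` with its sup metric. Banach's theorem gives its unique
fixed point.

Sion's theorem is stated for convex subsets of a real topological vector space, whereas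
`ProbabilityMeasure ℝ` is not one. Strategies are therefore moved into `(ℝ →ᵇ ℝ) → ℝ`, with the
product topology, by sending a measure to its integration functional (`actOnBCF`).
By Prokhorov's theorem the strategies on a compact set have compact image. After extending the
kernel to a bounded continuous function on the plane by Tietze's theorem, the payoff is evaluation
of the first functional at the kernel averaged over the second variable, and, by Fubini, evaluation
of the second functional at the kernel averaged over the first; so it is linear and continuous in
each argument.
-/

open MeasureTheory

/-- The relaxed upper Bellman operator `T⁺ₘ`: players choose Borel probability
measures supported on their compact control sets `U1, U2 ⊆ ℝ`, and the one-stage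
payoff is integrated against the product of the two mixed strategies. -/
noncomputable def relaxedUpperBellman {S : Type*} [Fintype S]
    (U1 U2 : Set ℝ) (α : ℝ)
    (p : S → S → ℝ → ℝ → ℝ) (c : S → ℝ → ℝ → ℝ) (V : S → ℝ) (x : S) : ℝ :=
  sInf {z | ∃ μ1 : ProbabilityMeasure ℝ, (μ1 : Measure ℝ) U1 = 1 ∧
    z = sSup {w | ∃ μ2 : ProbabilityMeasure ℝ, (μ2 : Measure ℝ) U2 = 1 ∧
      w = ∫ r1, ∫ r2, (c x r1 r2 + α * ∑ y, p x y r1 r2 * V y)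
            ∂(μ2 : Measure ℝ) ∂(μ1 : Measure ℝ)}}

/-- The relaxed lower Bellman operator `T⁻ₘ`. -/
noncomputable def relaxedLowerBellman {S : Type*} [Fintype S]
    (U1 U2 : Set ℝ) (α : ℝ)
    (p : S → S → ℝ → ℝ → ℝ) (c : S → ℝ → ℝ → ℝ) (V : S → ℝ) (x : S) : ℝ :=
  sSup {z | ∃ μ2 : ProbabilityMeasure ℝ, (μ2 : Measure ℝ) U2 = 1 ∧
    z = sInf {w | ∃ μ1 : ProbabilityMeasure ℝ, (μ1 : Measure ℝ) U1 = 1 ∧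
      w = ∫ r1, ∫ r2, (c x r1 r2 + α * ∑ y, p x y r1 r2 * V y)
            ∂(μ2 : Measure ℝ) ∂(μ1 : Measure ℝ)}}

open scoped BoundedContinuousFunction

/-! ### Mixed strategies and their embedding in a topological vector space -/

/-- The mixed strategies on `U`: Borel probability measures on `ℝ` giving full mass to `U`. -/
def probOn (U : Set ℝ) : Set (ProbabilityMeasure ℝ) := {μ | (μ : Measure ℝ) U = 1}

lemma mem_probOn {U : Set ℝ} {μ : ProbabilityMeasure ℝ} :
    μ ∈ probOn U ↔ (μ : Measure ℝ) U = 1 := Iff.rfl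

lemma probOn_nonempty {U : Set ℝ} (hU : U.Nonempty) : (probOn U).Nonempty := by
  obtain ⟨u, hu⟩ := hU
  exact ⟨⟨Measure.dirac u, inferInstance⟩, mem_probOn.mpr (by simp [hu])⟩

lemma isCompact_probOn {U : Set ℝ} (hU : IsCompact U) : IsCompact (probOn U) := by
  have h := isCompact_setOfPred_probabilityMeasure_mass_eq_compl_isCompact_le
    (E := ℝ) (u := fun _ => 0) (K := fun _ => U) tendsto_const_nhds (fun _ => hU)
    (Or.inl inferInstance)
  convert h using 1
  ext μ
  simp only [mem_probOn, Set.mem_ofPred_eq]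
  rw [← prob_compl_eq_zero_iff hU.measurableSet]
  simp [ProbabilityMeasure.null_iff_toMeasure_null]

lemma ae_mem_prod {U1 U2 : Set ℝ} (hU1 : IsCompact U1) (hU2 : IsCompact U2)
    {μ ν : ProbabilityMeasure ℝ} (hμ : μ ∈ probOn U1) (hν : ν ∈ probOn U2) :
    ∀ᵐ r ∂((μ : Measure ℝ).prod (ν : Measure ℝ)), r ∈ U1 ×ˢ U2 := by
  refine (mem_ae_iff_prob_eq_one (hU1.measurableSet.prod hU2.measurableSet)).mpr ?_
  rw [mem_probOn] at hμ hν
  rw [Measure.prod_prod, hμ, hν, one_mul]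

/-- The functional `g ↦ ∫ g dμ` on bounded continuous functions. Its target carries the product
topology, so that convergence of these functionals is weak convergence of measures. -/
noncomputable def actOnBCF (μ : ProbabilityMeasure ℝ) : (ℝ →ᵇ ℝ) → ℝ := fun g => ∫ r, g r ∂(μ : Measure ℝ)

lemma continuous_actOnBCF : Continuous actOnBCF :=
  continuous_pi fun g => ProbabilityMeasure.continuous_integral_boundedContinuousFunction g

lemma convex_image_probOn (U : Set ℝ) : Convex ℝ (actOnBCF '' probOn U) := by
  rintro _ ⟨μ, hμ, rfl⟩ _ ⟨ν, hν, rfl⟩ a b ha hb hab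
  have hsum : ENNReal.ofReal a + ENNReal.ofReal b = 1 := by
    rw [← ENNReal.ofReal_add ha hb, hab, ENNReal.ofReal_one]
  rw [mem_probOn] at hμ hν
  refine ⟨⟨ENNReal.ofReal a • (μ : Measure ℝ) + ENNReal.ofReal b • (ν : Measure ℝ),
    ⟨by simp [hsum]⟩⟩, mem_probOn.mpr (by simp [hμ, hν, hsum]), ?_⟩
  ext g
  have hi (κ : ProbabilityMeasure ℝ) : Integrable g (κ : Measure ℝ) := g.integrable _
  simp only [actOnBCF, ProbabilityMeasure.coe_mk, Pi.add_apply, Pi.smul_apply]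
  rw [integral_add_measure ((hi μ).smul_measure ENNReal.ofReal_ne_top)
    ((hi ν).smul_measure ENNReal.ofReal_ne_top), integral_smul_measure, integral_smul_measure,
    ENNReal.toReal_ofReal ha, ENNReal.toReal_ofReal hb]

/-- The bounded continuous function `r1 ↦ ∫ F (r1, r2) dν(r2)`. -/
noncomputable def averageSnd (F : ℝ × ℝ →ᵇ ℝ) (ν : ProbabilityMeasure ℝ) : ℝ →ᵇ ℝ :=
  BoundedContinuousFunction.ofNormedAddCommGroup (fun r1 => ∫ r2, F (r1, r2) ∂(ν : Measure ℝ))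
    (continuous_of_dominated (bound := fun _ => ‖F‖)
      (fun _ => (by fun_prop : Continuous _).aestronglyMeasurable)
      (fun _ => Filter.Eventually.of_forall fun _ => F.norm_coe_le_norm _)
      (integrable_const _) (Filter.Eventually.of_forall fun _ => by fun_prop))
    ‖F‖ (fun r1 => by
      simpa using norm_integral_le_of_norm_le_const (μ := (ν : Measure ℝ))
        (Filter.Eventually.of_forall fun r2 => F.norm_coe_le_norm (r1, r2)))

lemma actOnBCF_averageSnd (F : ℝ × ℝ →ᵇ ℝ) (μ ν : ProbabilityMeasure ℝ) :
    actOnBCF μ (averageSnd F ν) = ∫ r, F r ∂((μ : Measure ℝ).prod (ν : Measure ℝ)) :=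
  (integral_prod _ (F.integrable _)).symm

/-- Fubini: the double integral of `F` may also be computed by averaging over the first variable
first. -/
lemma actOnBCF_averageSnd_swap (F : ℝ × ℝ →ᵇ ℝ) (μ ν : ProbabilityMeasure ℝ) :
    actOnBCF ν (averageSnd (F.compContinuous ⟨Prod.swap, continuous_swap⟩) μ)
      = ∫ r, F r ∂((μ : Measure ℝ).prod (ν : Measure ℝ)) := by
  rw [actOnBCF_averageSnd]
  exact integral_prod_swap F

/-! ### Saddle points in mixed strategies -/

/-- Minimax theorem for a kernel that is bounded and continuous on the whole plane. -/
lemma exists_saddle_bcf {U1 U2 : Set ℝ} (hU1ne : U1.Nonempty) (hU1 : IsCompact U1)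
    (hU2ne : U2.Nonempty) (hU2 : IsCompact U2) (F : ℝ × ℝ →ᵇ ℝ) :
    ∃ a ∈ probOn U1, ∃ b ∈ probOn U2, IsSaddlePointOn (probOn U1) (probOn U2)
      (fun μ ν => ∫ r, F r ∂((μ : Measure ℝ).prod (ν : Measure ℝ))) a b := by
  have : Nonempty (ProbabilityMeasure ℝ) := (probOn_nonempty hU1ne).to_type
  set X := actOnBCF '' probOn U1
  set Y := actOnBCF '' probOn U2
  -- `m ψ` is a measure representing `ψ ∈ Y`; off `Y` its value is irrelevant.
  set m : ((ℝ →ᵇ ℝ) → ℝ) → ProbabilityMeasure ℝ := Function.invFunOn actOnBCF (probOn U2)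
  have hm : ∀ ψ ∈ Y, actOnBCF (m ψ) = ψ := fun ψ hψ => Function.invFunOn_eq hψ
  set f : ((ℝ →ᵇ ℝ) → ℝ) → ((ℝ →ᵇ ℝ) → ℝ) → ℝ := fun φ ψ => φ (averageSnd F (m ψ)) with hf
  -- Fubini exhibits the payoff, for a fixed first strategy, as an evaluation of `ψ`.
  have hf' (μ : ProbabilityMeasure ℝ) : Set.EqOn
      (fun ψ => ψ (averageSnd (F.compContinuous ⟨Prod.swap, continuous_swap⟩) μ))
      (f (actOnBCF μ)) Y := by
    intro ψ hψ
    simp only [hf]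
    rw [actOnBCF_averageSnd, ← actOnBCF_averageSnd_swap, hm ψ hψ]
  have hfval (μ ν : ProbabilityMeasure ℝ) (hν : ν ∈ probOn U2) : f (actOnBCF μ) (actOnBCF ν)
      = ∫ r, F r ∂((μ : Measure ℝ).prod (ν : Measure ℝ)) := by
    rw [← hf' μ ⟨ν, hν, rfl⟩]
    exact actOnBCF_averageSnd_swap F μ ν
  obtain ⟨_, ⟨a, ha, rfl⟩, _, ⟨b, hb, rfl⟩, hab⟩ := Sion.exists_isSaddlePointOn
    (X := X) (Y := Y) (f := f)
    ((probOn_nonempty hU1ne).image _) (convex_image_probOn U1)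
    ((isCompact_probOn hU1).image continuous_actOnBCF)
    (fun ψ _ => (continuous_apply (averageSnd F (m ψ))).lowerSemicontinuous.lowerSemicontinuousOn _)
    (fun ψ _ => ((LinearMap.proj (R := ℝ) (φ := fun _ : ℝ →ᵇ ℝ => ℝ)
      (averageSnd F (m ψ))).convexOn (convex_image_probOn U1)).quasiconvexOn)
    (convex_image_probOn U2) ((probOn_nonempty hU2ne).image _)
    ((isCompact_probOn hU2).image continuous_actOnBCF)
    (by
      rintro _ ⟨μ, -, rfl⟩
      exact ((continuous_apply _).continuousOn.congr (hf' μ).symm).upperSemicontinuousOn)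
    (by
      rintro _ ⟨μ, -, rfl⟩
      exact (((LinearMap.proj (R := ℝ) (φ := fun _ : ℝ →ᵇ ℝ => ℝ) _).concaveOn
        (convex_image_probOn U2)).congr (hf' μ)).quasiconcaveOn)
  refine ⟨a, ha, b, hb, fun μ hμ ν hν => ?_⟩
  have := hab _ ⟨μ, hμ, rfl⟩ _ ⟨ν, hν, rfl⟩
  rwa [hfval _ _ hν, hfval _ _ hb] at this

/-- The expected payoff when the players use the mixed strategies `μ` and `ν`, as an iterated
integral. -/
noncomputable def mixedPayoff (f : ℝ → ℝ → ℝ) (μ ν : ProbabilityMeasure ℝ) : ℝ :=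
  ∫ r1, ∫ r2, f r1 r2 ∂(ν : Measure ℝ) ∂(μ : Measure ℝ)

section payoff

variable {U1 U2 : Set ℝ} {f g : ℝ → ℝ → ℝ} {μ ν : ProbabilityMeasure ℝ}

lemma integrable_prod_of_continuousOn (hU1 : IsCompact U1) (hU2 : IsCompact U2)
    (hf : ContinuousOn (fun r : ℝ × ℝ => f r.1 r.2) (U1 ×ˢ U2))
    (hμ : μ ∈ probOn U1) (hν : ν ∈ probOn U2) :
    Integrable (fun r : ℝ × ℝ => f r.1 r.2) ((μ : Measure ℝ).prod (ν : Measure ℝ)) := by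
  have h := hf.integrableOn_compact (μ := (μ : Measure ℝ).prod (ν : Measure ℝ)) (hU1.prod hU2)
  rwa [IntegrableOn, Measure.restrict_eq_self_of_ae_mem (ae_mem_prod hU1 hU2 hμ hν)] at h

lemma mixedPayoff_eq_integral_prod (hU1 : IsCompact U1) (hU2 : IsCompact U2)
    (hf : ContinuousOn (fun r : ℝ × ℝ => f r.1 r.2) (U1 ×ˢ U2))
    (hμ : μ ∈ probOn U1) (hν : ν ∈ probOn U2) :
    mixedPayoff f μ ν = ∫ r : ℝ × ℝ, f r.1 r.2 ∂((μ : Measure ℝ).prod (ν : Measure ℝ)) :=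
  (integral_prod _ (integrable_prod_of_continuousOn hU1 hU2 hf hμ hν)).symm

lemma mixedPayoff_le_add (hU1 : IsCompact U1) (hU2 : IsCompact U2)
    (hf : ContinuousOn (fun r : ℝ × ℝ => f r.1 r.2) (U1 ×ˢ U2))
    (hg : ContinuousOn (fun r : ℝ × ℝ => g r.1 r.2) (U1 ×ˢ U2))
    {δ : ℝ} (hfg : ∀ r1 ∈ U1, ∀ r2 ∈ U2, f r1 r2 ≤ g r1 r2 + δ)
    (hμ : μ ∈ probOn U1) (hν : ν ∈ probOn U2) :
    mixedPayoff f μ ν ≤ mixedPayoff g μ ν + δ := by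
  have hgi := integrable_prod_of_continuousOn hU1 hU2 hg hμ hν
  rw [mixedPayoff_eq_integral_prod hU1 hU2 hf hμ hν, mixedPayoff_eq_integral_prod hU1 hU2 hg hμ hν]
  calc _ ≤ ∫ r : ℝ × ℝ, (g r.1 r.2 + δ) ∂((μ : Measure ℝ).prod (ν : Measure ℝ)) := by
        refine integral_mono_ae (integrable_prod_of_continuousOn hU1 hU2 hf hμ hν)
          (hgi.add (integrable_const δ)) ?_
        filter_upwards [ae_mem_prod hU1 hU2 hμ hν] with r hr using hfg _ hr.1 _ hr.2
    _ = _ := by rw [integral_add hgi (integrable_const δ)]; simp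

lemma exists_abs_mixedPayoff_le (hU1 : IsCompact U1) (hU2 : IsCompact U2)
    (hf : ContinuousOn (fun r : ℝ × ℝ => f r.1 r.2) (U1 ×ˢ U2)) :
    ∃ M, ∀ μ ∈ probOn U1, ∀ ν ∈ probOn U2, |mixedPayoff f μ ν| ≤ M := by
  obtain ⟨M, hM⟩ := (hU1.prod hU2).exists_bound_of_continuousOn hf
  refine ⟨M, fun μ hμ ν hν => ?_⟩
  rw [mixedPayoff_eq_integral_prod hU1 hU2 hf hμ hν]
  have := norm_integral_le_of_norm_le_const (μ := (μ : Measure ℝ).prod (ν : Measure ℝ))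
    (f := fun r : ℝ × ℝ => f r.1 r.2) (C := M)
    (by filter_upwards [ae_mem_prod hU1 hU2 hμ hν] with r hr using hM r hr)
  simpa using this

/-- A zero-sum game on compact control sets with continuous payoff has a saddle point in mixed
strategies. -/
lemma exists_saddle (hU1ne : U1.Nonempty) (hU1 : IsCompact U1)
    (hU2ne : U2.Nonempty) (hU2 : IsCompact U2)
    (hf : ContinuousOn (fun r : ℝ × ℝ => f r.1 r.2) (U1 ×ˢ U2)) :
    ∃ a ∈ probOn U1, ∃ b ∈ probOn U2,
      IsSaddlePointOn (probOn U1) (probOn U2) (mixedPayoff f) a b := by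
  have hK := hU1.prod hU2
  have := isCompact_iff_compactSpace.mp hK
  obtain ⟨F, -, hF⟩ := BoundedContinuousFunction.exists_norm_eq_domRestrict_eq_of_closed
    (BoundedContinuousFunction.mkOfCompact ⟨_, hf.domRestrict⟩) hK.isClosed
  have hFf : ∀ r ∈ U1 ×ˢ U2, F r = f r.1 r.2 := fun r hr => DFunLike.congr_fun hF ⟨r, hr⟩
  have hJ : ∀ μ ∈ probOn U1, ∀ ν ∈ probOn U2,
      ∫ r, F r ∂((μ : Measure ℝ).prod (ν : Measure ℝ)) = mixedPayoff f μ ν := by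
    intro μ hμ ν hν
    rw [mixedPayoff_eq_integral_prod hU1 hU2 hf hμ hν]
    refine integral_congr_ae ?_
    filter_upwards [ae_mem_prod hU1 hU2 hμ hν] with r hr using hFf r hr
  obtain ⟨a, ha, b, hb, hab⟩ := exists_saddle_bcf hU1ne hU1 hU2ne hU2 F
  refine ⟨a, ha, b, hb, fun μ hμ ν hν => ?_⟩
  rw [← hJ a ha ν hν, ← hJ μ hμ b hb]
  exact hab μ hμ ν hν

end payoff

/-! ### Values of games with a saddle point -/

section value

variable {A B : Type*} {P : Set A} {Q : Set B} {J K : A → B → ℝ} {a a' : A} {b b' : B}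

lemma sInf_sSup_eq_of_saddle (ha : a ∈ P) (hb : b ∈ Q) (h : IsSaddlePointOn P Q J a b)
    {M : ℝ} (hM : ∀ x ∈ P, ∀ y ∈ Q, |J x y| ≤ M) :
    sInf {z | ∃ x, x ∈ P ∧ z = sSup {w | ∃ y, y ∈ Q ∧ w = J x y}} = J a b := by
  have hsup : sSup {w | ∃ y, y ∈ Q ∧ w = J a y} = J a b :=
    IsGreatest.csSup_eq ⟨⟨b, hb, rfl⟩, by rintro _ ⟨y, hy, rfl⟩; exact h a ha y hy⟩
  refine IsLeast.csInf_eq ⟨⟨a, ha, hsup.symm⟩, ?_⟩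
  rintro _ ⟨x, hx, rfl⟩
  refine (h x hx b hb).trans (le_csSup ⟨M, ?_⟩ ⟨b, hb, rfl⟩)
  rintro _ ⟨y, hy, rfl⟩
  exact (abs_le.mp (hM x hx y hy)).2

lemma sSup_sInf_eq_of_saddle (ha : a ∈ P) (hb : b ∈ Q) (h : IsSaddlePointOn P Q J a b)
    {M : ℝ} (hM : ∀ x ∈ P, ∀ y ∈ Q, |J x y| ≤ M) :
    sSup {z | ∃ y, y ∈ Q ∧ z = sInf {w | ∃ x, x ∈ P ∧ w = J x y}} = J a b := by
  have hinf : sInf {w | ∃ x, x ∈ P ∧ w = J x b} = J a b :=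
    IsLeast.csInf_eq ⟨⟨a, ha, rfl⟩, by rintro _ ⟨x, hx, rfl⟩; exact h x hx b hb⟩
  refine IsGreatest.csSup_eq ⟨⟨b, hb, hinf.symm⟩, ?_⟩
  rintro _ ⟨y, hy, rfl⟩
  have hle : sInf {w | ∃ x, x ∈ P ∧ w = J x y} ≤ J a y := by
    refine csInf_le ⟨-M, ?_⟩ ⟨a, ha, rfl⟩
    rintro _ ⟨x, hx, rfl⟩
    exact (abs_le.mp (hM x hx y hy)).1
  exact hle.trans (h a ha y hy)

/-- Comparison of saddle values: play the minimizer's strategy `a'` of the second game against the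
maximizer's strategy `b` of the first. -/
lemma saddle_value_le_add (hb : b ∈ Q) (h : IsSaddlePointOn P Q J a b)
    (ha' : a' ∈ P) (h' : IsSaddlePointOn P Q K a' b') {δ : ℝ}
    (hJK : ∀ x ∈ P, ∀ y ∈ Q, J x y ≤ K x y + δ) : J a b ≤ K a' b' + δ :=
  calc J a b ≤ J a' b := h a' ha' b hb
    _ ≤ K a' b + δ := hJK a' ha' b hb
    _ ≤ K a' b' + δ := by gcongr; exact h' a' ha' b hb

end value

/-! ### The Bellman operators -/

lemma weighted_sum_le {S : Type*} [Fintype S] {q : S → ℝ} (hq : ∀ y, 0 ≤ q y)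
    (hq1 : ∑ y, q y = 1) (V W : S → ℝ) :
    ∑ y, q y * V y ≤ (∑ y, q y * W y) + dist V W := by
  calc ∑ y, q y * V y ≤ ∑ y, q y * (W y + dist V W) := by
        refine Finset.sum_le_sum fun y _ => mul_le_mul_of_nonneg_left ?_ (hq y)
        have h1 := dist_le_pi_dist V W y
        rw [Real.dist_eq] at h1
        linarith [le_abs_self (V y - W y)]
    _ = _ := by
        simp only [mul_add, Finset.sum_add_distrib]
        rw [← Finset.sum_mul, hq1, one_mul]

/-- **Existence of saddle points in relaxed controls** (Theorem 2 of the paper,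
discounted dynamic-programming form).  Under continuity alone, both relaxed
Bellman operators are `α`-contractions in the sup norm, each has a unique fixed
point, and the two fixed points coincide: in relaxed controls the discrete
Markov game always has a saddle point. -/
theorem relaxed_discrete_markov_game_saddle_point
    {S : Type*} [Fintype S] [Nonempty S]
    (U1 U2 : Set ℝ)
    (hU1ne : U1.Nonempty) (hU1cp : IsCompact U1)
    (hU2ne : U2.Nonempty) (hU2cp : IsCompact U2)
    (α : ℝ) (hα0 : 0 ≤ α) (hα1 : α < 1)
    (p : S → S → ℝ → ℝ → ℝ)
    (hpnn : ∀ x y, ∀ r1 ∈ U1, ∀ r2 ∈ U2, 0 ≤ p x y r1 r2)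
    (hpsum : ∀ x, ∀ r1 ∈ U1, ∀ r2 ∈ U2, (∑ y, p x y r1 r2) = 1)
    (hpcont : ∀ x y, ContinuousOn (fun r : ℝ × ℝ => p x y r.1 r.2) (U1 ×ˢ U2))
    (c : S → ℝ → ℝ → ℝ)
    (hccont : ∀ x, ContinuousOn (fun r : ℝ × ℝ => c x r.1 r.2) (U1 ×ˢ U2)) :
    (∀ V W : S → ℝ, ∀ x : S,
        |relaxedUpperBellman U1 U2 α p c V x - relaxedUpperBellman U1 U2 α p c W x|
          ≤ α * ⨆ y, |V y - W y|) ∧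
    (∀ V W : S → ℝ, ∀ x : S,
        |relaxedLowerBellman U1 U2 α p c V x - relaxedLowerBellman U1 U2 α p c W x|
          ≤ α * ⨆ y, |V y - W y|) ∧
    (∃! Vp : S → ℝ, relaxedUpperBellman U1 U2 α p c Vp = Vp) ∧
    (∃! Vm : S → ℝ, relaxedLowerBellman U1 U2 α p c Vm = Vm) ∧
    (∀ Vp Vm : S → ℝ, relaxedUpperBellman U1 U2 α p c Vp = Vp →
        relaxedLowerBellman U1 U2 α p c Vm = Vm → ∀ x : S, Vp x = Vm x) := by
  have hcont (V : S → ℝ) (x : S) : ContinuousOn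
      (fun r : ℝ × ℝ => c x r.1 r.2 + α * ∑ y, p x y r.1 r.2 * V y) (U1 ×ˢ U2) :=
    (hccont x).add (continuousOn_const.mul
      (continuousOn_finsetSum _ fun y _ => (hpcont x y).mul continuousOn_const))
  have hpay (V W : S → ℝ) (x : S) : ∀ r1 ∈ U1, ∀ r2 ∈ U2,
      c x r1 r2 + α * ∑ y, p x y r1 r2 * V y
        ≤ c x r1 r2 + α * ∑ y, p x y r1 r2 * W y + α * dist V W := by
    intro r1 h1 r2 h2
    have := mul_le_mul_of_nonneg_left (weighted_sum_le (fun y => hpnn x y r1 h1 r2 h2)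
      (hpsum x r1 h1 r2 h2) V W) hα0
    linarith
  -- A saddle point of the one-stage game for every continuation value `V` and state `x`.
  choose a ha b hb hab using fun (V : S → ℝ) (x : S) =>
    exists_saddle hU1ne hU1cp hU2ne hU2cp
      (f := fun r1 r2 => c x r1 r2 + α * ∑ y, p x y r1 r2 * V y) (hcont V x)
  have hupper (V : S → ℝ) (x : S) : relaxedUpperBellman U1 U2 α p c V x = mixedPayoff
      (fun r1 r2 => c x r1 r2 + α * ∑ y, p x y r1 r2 * V y) (a V x) (b V x) := by
    obtain ⟨M, hM⟩ := exists_abs_mixedPayoff_le hU1cp hU2cp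
      (f := fun r1 r2 => c x r1 r2 + α * ∑ y, p x y r1 r2 * V y) (hcont V x)
    exact sInf_sSup_eq_of_saddle (ha V x) (hb V x) (hab V x) hM
  have hlower (V : S → ℝ) (x : S) : relaxedLowerBellman U1 U2 α p c V x = mixedPayoff
      (fun r1 r2 => c x r1 r2 + α * ∑ y, p x y r1 r2 * V y) (a V x) (b V x) := by
    obtain ⟨M, hM⟩ := exists_abs_mixedPayoff_le hU1cp hU2cp
      (f := fun r1 r2 => c x r1 r2 + α * ∑ y, p x y r1 r2 * V y) (hcont V x)
    exact sSup_sInf_eq_of_saddle (ha V x) (hb V x) (hab V x) hM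
  have heq : relaxedLowerBellman U1 U2 α p c = relaxedUpperBellman U1 U2 α p c := by
    ext V x
    rw [hlower, hupper]
  have hle (V W : S → ℝ) (x : S) : relaxedUpperBellman U1 U2 α p c V x
      ≤ relaxedUpperBellman U1 U2 α p c W x + α * dist V W := by
    rw [hupper, hupper]
    exact saddle_value_le_add (hb V x) (hab V x) (ha W x) (hab W x)
      fun μ hμ ν hν => mixedPayoff_le_add hU1cp hU2cp (hcont V x) (hcont W x) (hpay V W x) hμ hν
  have habs (V W : S → ℝ) (x : S) : |relaxedUpperBellman U1 U2 α p c V x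
      - relaxedUpperBellman U1 U2 α p c W x| ≤ α * dist V W := by
    have h1 := hle V W x
    have h2 := hle W V x
    rw [dist_comm W V] at h2
    exact abs_le.mpr ⟨by linarith, by linarith⟩
  have hdist (V W : S → ℝ) : dist V W ≤ ⨆ y, |V y - W y| :=
    dist_pi_le_iff'.mpr fun y => le_ciSup (f := fun y => |V y - W y|) (Set.finite_range _).bddAbove y
  have hlip (V W : S → ℝ) (x : S) : |relaxedUpperBellman U1 U2 α p c V x
      - relaxedUpperBellman U1 U2 α p c W x| ≤ α * ⨆ y, |V y - W y| :=
    (habs V W x).trans (mul_le_mul_of_nonneg_left (hdist V W) hα0)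
  have hcontr : ContractingWith ⟨α, hα0⟩ (relaxedUpperBellman U1 U2 α p c) :=
    ⟨by exact_mod_cast hα1, LipschitzWith.of_dist_le_mul fun V W =>
      (dist_pi_le_iff (mul_nonneg hα0 dist_nonneg)).mpr fun x => habs V W x⟩
  have huniq : ∃! V : S → ℝ, relaxedUpperBellman U1 U2 α p c V = V :=
    ⟨hcontr.fixedPoint, hcontr.fixedPoint_isFixedPt, fun V hV => hcontr.fixedPoint_unique hV⟩
  rw [heq]
  exact ⟨hlip, hlip, huniq, huniq, fun Vp Vm hp hm x => congrFun (huniq.unique hp hm) x⟩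
end

section
/- With the transition weights $p^h$ of the Markov chain approximation defined from $A$, $b$, $Q$, $\beta$, and $h$ as in the context, for every $x \in \mathbb{R}^{l_0}$, $\iota \in \mathcal{M}$, and $(r_1,r_2) \in U_1 \times U_2$, the mean one-step displacement satisfies exactly $\sum_{(y,\ell)} p^h((x,\iota),(y,\ell)|r_1,r_2)\,(y - x) = \dfrac{h^2}{D^h(x,\iota) - \beta h^2}\, b(x,\iota,r_1,r_2)$, where the sum ranges over all listed target points; in particular, with interpolation interval $\Delta t^h(x,\iota) = h^2 / D^h(x,\iota)$, the mean displacement equals $b(x,\iota,r_1,r_2)\,\Delta t^h(x,\iota) + O(h^4)$, consistent with local consistency. -/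
/-!
Write `D` for the common denominator `denomD` of the weights, and group the jumps into opposite
pairs. The diffusion part of the jumps to `x ± e_j h` is the same for both signs, so only
`h b_j / D` times `h e_j` survives (`sum_wDrift`); the jumps to `x ± (e_j + e_k) h` have equal
weights and cancel at once; the jumps `(e_j - e_k) h` and `(e_k - e_j) h` have equal weights because
`A` is symmetric, so they cancel after exchanging `j` and `k` (`sum_wOppPair_eq_zero`). Regime
switches do not move `x`. The second identity is the partial fraction
`1 / D = 1 / (D + β h²) + β h² / ((D + β h²) D)`.
-/

/-- Sum of the absolute values of the off-diagonal entries of row `j`: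
`∑_{k ≠ j} |a_jk|`. -/
noncomputable def rowOffSum {l0 : ℕ} (a : Fin l0 → Fin l0 → ℝ) (j : Fin l0) : ℝ :=
  ∑ k ∈ Finset.univ.erase j, |a j k|

/-- `∑_{j < k} |a_jk|`. -/
noncomputable def upperOffSum {l0 : ℕ} (a : Fin l0 → Fin l0 → ℝ) : ℝ :=
  ∑ j, ∑ k ∈ Finset.univ.filter (fun k => j < k), |a j k|

/-- The common denominator `Dʰ(x,ι) - β h² = ∑_j a_jj - ∑_{j<k} |a_jk| - q_ιι h²`
of the transition weights (here `a = A(x,ι)` and `qii = q_ιι`). -/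
noncomputable def denomD {l0 : ℕ} (a : Fin l0 → Fin l0 → ℝ) (qii h : ℝ) : ℝ :=
  (∑ j, a j j) - upperOffSum a - qii * h ^ 2

/-- Transition weight from `(x,ι)` to `(x + s·e_j h, ι)` (with sign `s = 1` or
`s = -1`): `(s h b_j + a_jj - ∑_{k≠j}|a_jk|) / (2 (Dʰ - β h²))`, where
`bv = b(x,ι,r1,r2)`. -/
noncomputable def wDrift {l0 : ℕ} (a : Fin l0 → Fin l0 → ℝ) (bv : Fin l0 → ℝ)
    (qii h s : ℝ) (j : Fin l0) : ℝ :=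
  (s * h * bv j + a j j - rowOffSum a j) / (2 * denomD a qii h)

/-- Transition weight from `(x,ι)` to `(x + e_j h + e_k h, ι)` and likewise to
`(x - e_j h - e_k h, ι)`, for `j < k`: `a_jk⁺ / (2 (Dʰ - β h²))`. -/
noncomputable def wSamePair {l0 : ℕ} (a : Fin l0 → Fin l0 → ℝ) (qii h : ℝ)
    (j k : Fin l0) : ℝ :=
  max (a j k) 0 / (2 * denomD a qii h)

/-- Transition weight from `(x,ι)` to `(x + e_j h - e_k h, ι)`, for `j ≠ k`:
`a_jk⁻ / (2 (Dʰ - β h²))`. -/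
noncomputable def wOppPair {l0 : ℕ} (a : Fin l0 → Fin l0 → ℝ) (qii h : ℝ)
    (j k : Fin l0) : ℝ :=
  max (-(a j k)) 0 / (2 * denomD a qii h)

/-- Transition weight from `(x,ι)` to `(x, ℓ)`, for `ℓ ≠ ι` (with `qil = q_ιℓ`):
`q_ιℓ h² / (Dʰ - β h²)`. -/
noncomputable def wSwitch {l0 : ℕ} (a : Fin l0 → Fin l0 → ℝ) (qii h qil : ℝ) : ℝ :=
  qil * h ^ 2 / denomD a qii h

/-- The mean displacement from the jumps to `x + e_j h - e_k h` vanishes: the weights are symmetric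
in `(j, k)` while the displacement is antisymmetric. -/
theorem sum_wOppPair_eq_zero {l0 : ℕ} (a : Fin l0 → Fin l0 → ℝ) (ha : ∀ j k, a j k = a k j)
    (qii h : ℝ) :
    (∑ j, ∑ k ∈ Finset.univ.filter (fun k => k ≠ j),
      wOppPair a qii h j k
        • ((Pi.single j h : Fin l0 → ℝ) + (Pi.single k (-h) : Fin l0 → ℝ))) = 0 := by
  -- The sum equals its own negative.
  refine self_eq_neg.mp ?_
  simp only [Finset.sum_filter]
  conv_lhs => rw [Finset.sum_comm]
  simp only [← Finset.sum_neg_distrib]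
  refine Finset.sum_congr rfl fun j _ => Finset.sum_congr rfl fun k _ => ?_
  have hw : wOppPair a qii h k j = wOppPair a qii h j k := by
    simp only [wOppPair, ha k j]
  by_cases hjk : j = k
  · simp [hjk]
  · rw [if_pos hjk, if_pos (Ne.symm hjk), hw, ← smul_neg, Pi.single_neg, Pi.single_neg]
    congr 1
    abel

/-- The jumps to `x ± e_j h` carry the whole mean displacement. -/
theorem sum_wDrift {l0 : ℕ} (a : Fin l0 → Fin l0 → ℝ) (bv : Fin l0 → ℝ) (qii h : ℝ)
    (hD : denomD a qii h ≠ 0) :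
    (∑ j, wDrift a bv qii h 1 j • (Pi.single j h : Fin l0 → ℝ))
      + (∑ j, wDrift a bv qii h (-1) j • (Pi.single j (-h) : Fin l0 → ℝ))
      = (h ^ 2 / denomD a qii h) • bv := by
  ext i
  simp only [Pi.add_apply, Finset.sum_apply, Pi.smul_apply, smul_eq_mul, Pi.single_apply,
    mul_ite, mul_zero, Finset.sum_ite_eq, Finset.mem_univ, if_true, wDrift]
  field_simp
  ring

/-- **First-moment local consistency** (part of Lemma 4).  The mean one-step
displacement of the approximating chain equals exactly
`h²/(Dʰ - β h²) · b(x,ι,r1,r2)`; moreover, with interpolation interval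
`Δtʰ = h²/Dʰ` (here `Dʰ = denomD + β h²`), this equals
`b Δtʰ + (β h⁴ / (Dʰ (Dʰ - β h²))) b`, an `O(h⁴)` correction, consistent with
local consistency. -/
theorem markov_chain_approx_first_moment
    {l0 : ℕ} (hl0 : 1 ≤ l0) {M : Type*} [Fintype M] [DecidableEq M]
    (U1 U2 : Set ℝ)
    (A : (Fin l0 → ℝ) → M → Fin l0 → Fin l0 → ℝ)
    (b : (Fin l0 → ℝ) → M → ℝ → ℝ → Fin l0 → ℝ)
    (Q : M → M → ℝ) (β h : ℝ) (hβ : 0 < β) (hh : 0 < h)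
    (hAsymm : ∀ x ι j k, A x ι j k = A x ι k j)
    (hQoff : ∀ ι ℓ, ℓ ≠ ι → 0 ≤ Q ι ℓ)
    (hQrow : ∀ ι, (∑ ℓ, Q ι ℓ) = 0)
    (x : Fin l0 → ℝ) (ι : M) (r1 r2 : ℝ) (hr1 : r1 ∈ U1) (hr2 : r2 ∈ U2)
    (hD : 0 < denomD (A x ι) (Q ι ι) h) :
    (∑ j, wDrift (A x ι) (b x ι r1 r2) (Q ι ι) h 1 j
        • (Pi.single j h : Fin l0 → ℝ))
      + (∑ j, wDrift (A x ι) (b x ι r1 r2) (Q ι ι) h (-1) j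
          • (Pi.single j (-h) : Fin l0 → ℝ))
      + (∑ j, ∑ k ∈ Finset.univ.filter (fun k => j < k),
          (wSamePair (A x ι) (Q ι ι) h j k
              • ((Pi.single j h : Fin l0 → ℝ) + (Pi.single k h : Fin l0 → ℝ))
            + wSamePair (A x ι) (Q ι ι) h j k
              • (-((Pi.single j h : Fin l0 → ℝ)
                  + (Pi.single k h : Fin l0 → ℝ)))))
      + (∑ j, ∑ k ∈ Finset.univ.filter (fun k => k ≠ j),
          wOppPair (A x ι) (Q ι ι) h j k
            • ((Pi.single j h : Fin l0 → ℝ) + (Pi.single k (-h) : Fin l0 → ℝ)))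
      + (∑ ℓ ∈ Finset.univ.erase ι,
          wSwitch (A x ι) (Q ι ι) h (Q ι ℓ) • (0 : Fin l0 → ℝ))
      = (h ^ 2 / denomD (A x ι) (Q ι ι) h) • b x ι r1 r2
    ∧
    (h ^ 2 / denomD (A x ι) (Q ι ι) h) • b x ι r1 r2
      = (h ^ 2 / (denomD (A x ι) (Q ι ι) h + β * h ^ 2)) • b x ι r1 r2
        + (β * h ^ 4 / ((denomD (A x ι) (Q ι ι) h + β * h ^ 2)
            * denomD (A x ι) (Q ι ι) h)) • b x ι r1 r2 := by
  have hD' : denomD (A x ι) (Q ι ι) h + β * h ^ 2 ≠ 0 := by positivity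
  constructor
  · rw [sum_wDrift _ _ _ _ hD.ne', sum_wOppPair_eq_zero _ (hAsymm x ι)]
    simp
  · rw [← add_smul]
    congr 1
    field_simp
end

section
/- With the transition weights $p^h$ of the Markov chain approximation defined from $A$, $b$, $Q$, $\beta$, and $h$ as in the context, for every $x \in \mathbb{R}^{l_0}$, $\iota \in \mathcal{M}$, $(r_1,r_2) \in U_1 \times U_2$, and all coordinate indices $j, k \in \{1,\dots,l_0\}$, the second moments of the one-step displacement satisfy exactly $\sum_{(y,\ell)} p^h((x,\iota),(y,\ell)|r_1,r_2)\,(y - x)_j (y - x)_k = \dfrac{h^2}{D^h(x,\iota) - \beta h^2}\, a_{jk}(x,\iota)$, where the sum ranges over all listed target points. -/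
/-- For a symmetric summand, twice the sum over pairs `i < i'` is the sum over ordered pairs of
distinct indices. -/
lemma sum_lt_add_self {n : ℕ} (f : Fin n → Fin n → ℝ) (hf : ∀ i i', f i i' = f i' i) :
    (∑ i, ∑ i' ∈ Finset.univ.filter (fun i' => i < i'), (f i i' + f i i'))
      = ∑ i, ∑ i' ∈ Finset.univ.filter (fun i' => i' ≠ i), f i i' := by
  have h1 : (∑ i, ∑ i' ∈ Finset.univ.filter (fun i' => i < i'), f i i')
      = ∑ i, ∑ i' ∈ Finset.univ.filter (fun i' => i' < i), f i i' := by
    simp only [Finset.sum_filter]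
    rw [Finset.sum_comm]
    simp only [hf]
  simp only [Finset.sum_add_distrib]
  nth_rewrite 2 [h1]
  rw [← Finset.sum_add_distrib]
  refine Finset.sum_congr rfl fun i _ => ?_
  simp only [Finset.sum_filter, ← Finset.sum_add_distrib]
  refine Finset.sum_congr rfl fun i' _ => ?_
  rcases lt_trichotomy i i' with h | h | h
  · simp [h, h.not_gt, h.ne']
  · simp [h]
  · simp [h, h.not_gt, h.ne]

/-- With `p, p', q, q'` the deltas `δᵢ j, δᵢ' j, δᵢ k, δᵢ' k`, a diagonal move of weight `t⁺` and an
antidiagonal move of weight `t⁻` together contribute `|t|` on the squares and `t` on the mixed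
products. -/
lemma pair_combine (t p p' q q' : ℝ) :
    max t 0 * ((p + p') * (q + q')) + max (-t) 0 * ((p - p') * (q - q'))
      = |t| * (p * q + p' * q') + t * (p * q' + p' * q) := by
  rcases le_total 0 t with h | h
  · rw [max_eq_left h, max_eq_right (by linarith), abs_of_nonneg h]; ring
  · rw [max_eq_right h, max_eq_left (by linarith), abs_of_nonpos h]; ring

lemma sum_ne_swap {n : ℕ} (f : Fin n → Fin n → ℝ) :
    (∑ i, ∑ i' ∈ Finset.univ.filter (fun i' => i' ≠ i), f i' i)
      = ∑ i, ∑ i' ∈ Finset.univ.filter (fun i' => i' ≠ i), f i i' := by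
  simp only [Finset.sum_filter]
  rw [Finset.sum_comm]
  simp only [ne_comm]

/-- The deltas collapse the sum of the pair contributions to a row sum on the diagonal `j = k` and to
the single entry `a j k` off it. -/
lemma sum_pairs {n : ℕ} (a : Fin n → Fin n → ℝ) (ha : ∀ i i', a i i' = a i' i) (j k : Fin n) :
    (∑ i, ∑ i' ∈ Finset.univ.filter (fun i' => i' ≠ i),
      (|a i i'| * ((Pi.single i 1 : Fin n → ℝ) j * (Pi.single i 1 : Fin n → ℝ) k
          + (Pi.single i' 1 : Fin n → ℝ) j * (Pi.single i' 1 : Fin n → ℝ) k)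
        + a i i' * ((Pi.single i 1 : Fin n → ℝ) j * (Pi.single i' 1 : Fin n → ℝ) k
          + (Pi.single i' 1 : Fin n → ℝ) j * (Pi.single i 1 : Fin n → ℝ) k)))
      = 2 * (if j = k then rowOffSum a j else a j k) := by
  -- Half of the summand, in which only the first index carries the factor `δᵢ j`.
  let g : Fin n → Fin n → ℝ := fun i i' =>
    |a i i'| * ((Pi.single i 1 : Fin n → ℝ) j * (Pi.single i 1 : Fin n → ℝ) k)
      + a i i' * ((Pi.single i 1 : Fin n → ℝ) j * (Pi.single i' 1 : Fin n → ℝ) k)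
  have hg : ∀ i i', (|a i i'| * ((Pi.single i 1 : Fin n → ℝ) j * (Pi.single i 1 : Fin n → ℝ) k
          + (Pi.single i' 1 : Fin n → ℝ) j * (Pi.single i' 1 : Fin n → ℝ) k)
        + a i i' * ((Pi.single i 1 : Fin n → ℝ) j * (Pi.single i' 1 : Fin n → ℝ) k
          + (Pi.single i' 1 : Fin n → ℝ) j * (Pi.single i 1 : Fin n → ℝ) k))
      = g i i' + g i' i := by
    intro i i'
    simp only [g, ha i' i]
    ring
  simp only [hg, Finset.sum_add_distrib]
  rw [sum_ne_swap g, ← two_mul]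
  congr 1
  rw [Finset.sum_eq_single j]
  · by_cases hjk : j = k
    · subst hjk
      rw [if_pos rfl, rowOffSum, ← Finset.filter_ne' Finset.univ j]
      refine Finset.sum_congr rfl fun i' hi' => ?_
      have : j ≠ i' := (Finset.mem_filter.1 hi').2.symm
      simp [g, this]
    · rw [if_neg hjk, Finset.sum_eq_single k]
      · simp [g, Ne.symm hjk]
      · intro i' _ hi'
        simp [g, Ne.symm hjk, hi'.symm]
      · intro hk
        exact absurd (Finset.mem_filter.2 ⟨Finset.mem_univ k, fun e => hjk e.symm⟩) hk
  · intro i _ hi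
    simp [g, hi.symm]
  · simp

lemma single_eq_mul {n : ℕ} (i j : Fin n) (h : ℝ) :
    (Pi.single i h : Fin n → ℝ) j = h * (Pi.single i 1 : Fin n → ℝ) j := by
  by_cases hij : j = i
  · subst hij; simp
  · simp [hij]

/-- **Second-moment local consistency** (covariance part of Lemma 4).  For all
coordinate indices `j, k`, the second moments of the one-step displacement of the
approximating chain satisfy exactly
`∑_{(y,ℓ)} pʰ((x,ι),(y,ℓ)|r) (y-x)_j (y-x)_k = h²/(Dʰ - β h²) · a_jk(x,ι)`. -/
theorem markov_chain_approx_second_moment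
    {l0 : ℕ} (hl0 : 1 ≤ l0) {M : Type*} [Fintype M] [DecidableEq M]
    (U1 U2 : Set ℝ)
    (A : (Fin l0 → ℝ) → M → Fin l0 → Fin l0 → ℝ)
    (b : (Fin l0 → ℝ) → M → ℝ → ℝ → Fin l0 → ℝ)
    (Q : M → M → ℝ) (β h : ℝ) (hβ : 0 < β) (hh : 0 < h)
    (hAsymm : ∀ x ι j k, A x ι j k = A x ι k j)
    (hQoff : ∀ ι ℓ, ℓ ≠ ι → 0 ≤ Q ι ℓ)
    (hQrow : ∀ ι, (∑ ℓ, Q ι ℓ) = 0)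
    (x : Fin l0 → ℝ) (ι : M) (r1 r2 : ℝ) (hr1 : r1 ∈ U1) (hr2 : r2 ∈ U2)
    (hD : 0 < denomD (A x ι) (Q ι ι) h) :
    ∀ j k : Fin l0,
      (∑ i, wDrift (A x ι) (b x ι r1 r2) (Q ι ι) h 1 i
          * ((Pi.single i h : Fin l0 → ℝ) j * (Pi.single i h : Fin l0 → ℝ) k))
        + (∑ i, wDrift (A x ι) (b x ι r1 r2) (Q ι ι) h (-1) i
            * ((Pi.single i (-h) : Fin l0 → ℝ) j
              * (Pi.single i (-h) : Fin l0 → ℝ) k))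
        + (∑ i, ∑ i' ∈ Finset.univ.filter (fun i' => i < i'),
            (wSamePair (A x ι) (Q ι ι) h i i'
                * (((Pi.single i h : Fin l0 → ℝ)
                      + (Pi.single i' h : Fin l0 → ℝ)) j
                  * ((Pi.single i h : Fin l0 → ℝ)
                      + (Pi.single i' h : Fin l0 → ℝ)) k)
              + wSamePair (A x ι) (Q ι ι) h i i'
                * ((-((Pi.single i h : Fin l0 → ℝ)
                      + (Pi.single i' h : Fin l0 → ℝ))) j
                  * (-((Pi.single i h : Fin l0 → ℝ)
                      + (Pi.single i' h : Fin l0 → ℝ))) k)))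
        + (∑ i, ∑ i' ∈ Finset.univ.filter (fun i' => i' ≠ i),
            wOppPair (A x ι) (Q ι ι) h i i'
              * (((Pi.single i h : Fin l0 → ℝ)
                    + (Pi.single i' (-h) : Fin l0 → ℝ)) j
                * ((Pi.single i h : Fin l0 → ℝ)
                    + (Pi.single i' (-h) : Fin l0 → ℝ)) k))
        + (∑ ℓ ∈ Finset.univ.erase ι,
            wSwitch (A x ι) (Q ι ι) h (Q ι ℓ)
              * ((0 : Fin l0 → ℝ) j * (0 : Fin l0 → ℝ) k))
        = (h ^ 2 / denomD (A x ι) (Q ι ι) h) * A x ι j k := by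
  intro j k
  have hs : ∀ i i', A x ι i i' = A x ι i' i := hAsymm x ι
  generalize A x ι = a at *
  generalize b x ι r1 r2 = v
  generalize Q ι ι = q at *
  -- Regime switches carry no displacement.
  simp only [Pi.zero_apply, mul_zero, Finset.sum_const_zero, add_zero]
  simp only [Pi.neg_apply, neg_mul_neg]
  -- The moves `± eᵢ h` together.
  have hdrift : (∑ i, wDrift a v q h 1 i
          * ((Pi.single i h : Fin l0 → ℝ) j * (Pi.single i h : Fin l0 → ℝ) k))
        + (∑ i, wDrift a v q h (-1) i
            * ((Pi.single i (-h) : Fin l0 → ℝ) j * (Pi.single i (-h) : Fin l0 → ℝ) k))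
      = h ^ 2 / denomD a q h * (if j = k then a j j - rowOffSum a j else 0) := by
    rw [← Finset.sum_add_distrib, Finset.sum_eq_single j]
    · by_cases hjk : j = k
      · subst hjk
        simp only [Pi.single_eq_same, wDrift, if_true]
        field_simp
        ring
      · simp [hjk, Ne.symm hjk]
    · intro i _ hi
      simp [hi.symm]
    · simp
  rw [hdrift, sum_lt_add_self (fun i i' => wSamePair a q h i i'
      * (((Pi.single i h : Fin l0 → ℝ) + (Pi.single i' h : Fin l0 → ℝ)) j
        * ((Pi.single i h : Fin l0 → ℝ) + (Pi.single i' h : Fin l0 → ℝ)) k))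
    (fun i i' => by
      simp only [wSamePair, hs i' i, add_comm (Pi.single i' h : Fin l0 → ℝ)]),
    add_assoc, ← Finset.sum_add_distrib]
  simp only [← Finset.sum_add_distrib]
  -- The diagonal and antidiagonal pair moves together.
  have hpair : ∀ i i', wSamePair a q h i i'
      * (((Pi.single i h : Fin l0 → ℝ) + (Pi.single i' h : Fin l0 → ℝ)) j
        * ((Pi.single i h : Fin l0 → ℝ) + (Pi.single i' h : Fin l0 → ℝ)) k)
      + wOppPair a q h i i'
      * (((Pi.single i h : Fin l0 → ℝ) + (Pi.single i' (-h) : Fin l0 → ℝ)) j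
        * ((Pi.single i h : Fin l0 → ℝ) + (Pi.single i' (-h) : Fin l0 → ℝ)) k)
      = h ^ 2 / (2 * denomD a q h) *
        (|a i i'| * ((Pi.single i 1 : Fin l0 → ℝ) j * (Pi.single i 1 : Fin l0 → ℝ) k
          + (Pi.single i' 1 : Fin l0 → ℝ) j * (Pi.single i' 1 : Fin l0 → ℝ) k)
        + a i i' * ((Pi.single i 1 : Fin l0 → ℝ) j * (Pi.single i' 1 : Fin l0 → ℝ) k
          + (Pi.single i' 1 : Fin l0 → ℝ) j * (Pi.single i 1 : Fin l0 → ℝ) k)) := by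
    intro i i'
    rw [← pair_combine]
    simp only [Pi.add_apply, wSamePair, wOppPair, single_eq_mul _ _ h, single_eq_mul _ _ (-h)]
    ring
  simp only [hpair, ← Finset.mul_sum]
  rw [sum_pairs a hs]
  by_cases hjk : j = k
  · subst hjk
    simp only [if_true]
    field_simp
    ring
  · simp only [if_neg hjk]
    field_simp
    ring
end
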